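/- Carleman estimate with linear weight for the acoustic Helmholtz operator (Proposition 5.1, classical formulation): Let n ≥ 2, κ > 1 and k ≥ 1. Let q : ℝⁿ → ℝ be C¹ with κ⁻¹ ≤ q(x) ≤ κ and ∇q(x)·x ≥ 0 for all x. Then there exist τ₀ > 0 and C > 0, depending only on n and κ, such that for every τ ≥ τ₀, every C² function u : ℝⁿ → ℝ with compact support contained in B₂ \ closure(B₁), every C¹ vector field F = (F¹,…,Fⁿ) with compact support contained in B₂ \ closure(B₁), and every continuous f : ℝⁿ → ℝ supported in B₂ \ closure(B₁) satisfying Δu(x) + k²q(x)u(x) = f(x) + Σⱼ ∂ⱼFʲ(x) for all x, one has τ·(∫ |x|^{2τ} u(x)² dx)^{1/2} + (∫ |x|^{2τ+2} |∇u(x)|² dx)^{1/2} + τ^{1/2} k (∫ q(x)|x|^{2τ+2} u(x)² dx)^{1/2} ≤ C [ (∫ |x|^{2τ+4} f(x)² dx)^{1/2} + max(τ,k) Σⱼ (∫ |x|^{2τ+2} Fʲ(x)² dx)^{1/2} ], all integrals being over ℝⁿ. -/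

import Mathlib

open MeasureTheory Real
open scoped InnerProductSpace

/-- The `j`-th partial derivative of `u : ℝⁿ → ℝ`. -/
noncomputable def pderiv' {n : ℕ} (j : Fin n) (u : EuclideanSpace ℝ (Fin n) → ℝ)
    (x : EuclideanSpace ℝ (Fin n)) : ℝ :=
  fderiv ℝ u x (EuclideanSpace.single j 1)

/-- The Laplacian of `u : ℝⁿ → ℝ`, as the sum of the second partial derivatives. -/
noncomputable def lap {n : ℕ} (u : EuclideanSpace ℝ (Fin n) → ℝ)
    (x : EuclideanSpace ℝ (Fin n)) : ℝ :=
  ∑ j : Fin n, pderiv' j (pderiv' j u) x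

/-!
Test the equation against the multiplier `x · ∇u + (τ + n/2) u` with the weight `‖x‖ ^ (2τ+2)`.
By the Rellich identity the terms in `|∇u|²` cancel and a multiple of the square of the multiplier
remains, while `x · ∇q ≥ 0` gives the potential term a favourable sign; this is the estimate for a
source in `L²`.

A source `div F` is too singular for this argument, so it is removed first. The gradient of the
Newtonian potential, truncated at the scale `T = 1 / max (τ, k)`, gives by convolution a function
`v` with `Δv = div F - div (F ⋆ ρ_T)`, where `ρ_T` is a mollifier at scale `T`. At this scale the
weight varies only by a constant factor, so convolutions may be bounded by Young's inequality, and
both `v` and `k² q v` as well as the remaining source `div (F ⋆ ρ_T)` are controlled by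
`max (τ, k) ‖F‖` in the weighted norms. In order to work with classical derivatives the kernel is
smoothed near the origin at a scale `ε` that tends to `0` at the end. Finally the gradient of `u`
is recovered by testing the equation against `‖x‖ ^ (2τ+2) u`.
-/

local notation "𝓔" n:max => EuclideanSpace ℝ (Fin n)

open Filter Topology

section Calculus

lemma hasCompactSupport_sum {X ι : Type*} [TopologicalSpace X] [Fintype ι] {v : ι → X → ℝ}
    (hv : ∀ i, HasCompactSupport (v i)) : HasCompactSupport fun x ↦ ∑ i, v i x := by
  refine (isCompact_iUnion hv).of_isClosed_subset (isClosed_tsupport _)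
    (closure_minimal (fun x hx ↦ ?_) (isClosed_iUnion_of_finite fun i ↦ isClosed_tsupport _))
  obtain ⟨i, -, hi⟩ := Finset.exists_ne_zero_of_sum_ne_zero hx
  exact Set.mem_iUnion.2 ⟨i, subset_tsupport _ hi⟩

variable {n : ℕ} {f g u : 𝓔 n → ℝ} {F : Fin n → 𝓔 n → ℝ} {x : 𝓔 n}

lemma pderiv'_sub (j : Fin n) (hf : DifferentiableAt ℝ f x) (hg : DifferentiableAt ℝ g x) :
    pderiv' j (fun y ↦ f y - g y) x = pderiv' j f x - pderiv' j g x := by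
  simp only [pderiv', fderiv_fun_sub hf hg, sub_apply]

lemma pderiv'_add (j : Fin n) (hf : DifferentiableAt ℝ f x) (hg : DifferentiableAt ℝ g x) :
    pderiv' j (fun y ↦ f y + g y) x = pderiv' j f x + pderiv' j g x := by
  simp only [pderiv', fderiv_fun_add hf hg, add_apply]

lemma pderiv'_const_mul (j : Fin n) (c : ℝ) (hf : DifferentiableAt ℝ f x) :
    pderiv' j (fun y ↦ c * f y) x = c * pderiv' j f x := by
  simp only [pderiv', fderiv_const_mul hf, smul_apply, smul_eq_mul]

lemma pderiv'_mul (j : Fin n) (hf : DifferentiableAt ℝ f x) (hg : DifferentiableAt ℝ g x) :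
    pderiv' j (fun y ↦ f y * g y) x = f x * pderiv' j g x + pderiv' j f x * g x := by
  simp only [pderiv', fderiv_fun_mul hf hg, add_apply,
    smul_apply, smul_eq_mul, mul_comm]

lemma pderiv'_sum {ι : Type*} {s : Finset ι} {v : ι → 𝓔 n → ℝ} (j : Fin n)
    (hv : ∀ i ∈ s, DifferentiableAt ℝ (v i) x) :
    pderiv' j (fun y ↦ ∑ i ∈ s, v i y) x = ∑ i ∈ s, pderiv' j (v i) x := by
  simp only [pderiv', fderiv_fun_sum hv, sum_apply]

lemma contDiff_coord {m : WithTop ℕ∞} (i : Fin n) : ContDiff ℝ m (fun y : 𝓔 n ↦ y i) :=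
  (EuclideanSpace.proj (𝕜 := ℝ) i).contDiff

lemma pderiv'_coord (i j : Fin n) (x : 𝓔 n) :
    pderiv' j (fun y ↦ y i) x = if i = j then 1 else 0 := by
  have h : HasFDerivAt (fun y : 𝓔 n ↦ y i) (EuclideanSpace.proj (𝕜 := ℝ) i) x :=
    (EuclideanSpace.proj (𝕜 := ℝ) i).hasFDerivAt
  simp [pderiv', h.fderiv]

lemma pderiv'_norm_rpow (j : Fin n) (x : 𝓔 n) {p : ℝ} (hp : 1 < p) :
    pderiv' j (fun y ↦ ‖y‖ ^ p) x = p * ‖x‖ ^ (p - 2) * x j := by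
  simp [pderiv', (hasFDerivAt_norm_rpow x hp).fderiv, EuclideanSpace.inner_single_right]

lemma contDiff_pderiv' {m k : WithTop ℕ∞} (j : Fin n) (hu : ContDiff ℝ k u) (hm : m + 1 ≤ k) :
    ContDiff ℝ m (pderiv' j u) :=
  (hu.fderiv_right hm).clm_apply contDiff_const

lemma continuous_pderiv' (j : Fin n) (hu : ContDiff ℝ 1 u) : Continuous (pderiv' j u) :=
  (contDiff_pderiv' (m := 0) j hu (by norm_num)).continuous

lemma contDiff_one_pderiv' (j : Fin n) (hu : ContDiff ℝ 2 u) : ContDiff ℝ 1 (pderiv' j u) :=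
  contDiff_pderiv' j hu (by norm_num)

lemma continuous_lap (hu : ContDiff ℝ 2 u) : Continuous (lap u) :=
  continuous_finsetSum _ fun j _ ↦ continuous_pderiv' j (contDiff_one_pderiv' j hu)

lemma pderiv'_comm (i j : Fin n) (hu : ContDiff ℝ 2 u) (x : 𝓔 n) :
    pderiv' i (pderiv' j u) x = pderiv' j (pderiv' i u) x := by
  have hd : DifferentiableAt ℝ (fderiv ℝ u) x :=
    (hu.fderiv_right (m := 1) (by norm_num)).differentiable (by norm_num) x
  have second (a b : Fin n) : pderiv' a (pderiv' b u) x
      = fderiv ℝ (fderiv ℝ u) x (EuclideanSpace.single a 1) (EuclideanSpace.single b 1) := by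
    unfold pderiv'
    rw [fderiv_clm_apply hd (by fun_prop)]
    simp
  rw [second, second]
  exact hu.contDiffAt.isSymmSndFDerivAt (by simp) _ _

lemma tsupport_pderiv'_subset (j : Fin n) (u : 𝓔 n → ℝ) :
    tsupport (pderiv' j u) ⊆ tsupport u :=
  tsupport_fderiv_apply_subset ℝ _

lemma tsupport_lap_subset (u : 𝓔 n → ℝ) : tsupport (lap u) ⊆ tsupport u := by
  refine closure_minimal (fun x hx ↦ ?_) (isClosed_tsupport u)
  by_contra hu
  refine hx (Finset.sum_eq_zero fun j _ ↦ image_eq_zero_of_notMem_tsupport fun h ↦ hu ?_)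
  exact tsupport_pderiv'_subset j u (tsupport_pderiv'_subset j _ h)

lemma hasCompactSupport_lap (hu : HasCompactSupport u) : HasCompactSupport (lap u) :=
  hu.mono' (subset_closure.trans (tsupport_lap_subset u))

lemma hasCompactSupport_pderiv' (j : Fin n) (hu : HasCompactSupport u) :
    HasCompactSupport (pderiv' j u) :=
  hu.fderiv_apply (𝕜 := ℝ) _

lemma lap_sub (hf : ContDiff ℝ 2 f) (hg : ContDiff ℝ 2 g) (x : 𝓔 n) :
    lap (fun y ↦ f y - g y) x = lap f x - lap g x := by
  have hdiff {u : 𝓔 n → ℝ} (hu : ContDiff ℝ 2 u) : Differentiable ℝ u :=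
    hu.differentiable (by norm_num)
  have hdiff' (j : Fin n) {u : 𝓔 n → ℝ} (hu : ContDiff ℝ 2 u) : Differentiable ℝ (pderiv' j u) :=
    (contDiff_one_pderiv' j hu).differentiable (by norm_num)
  simp only [lap, ← Finset.sum_sub_distrib]
  refine Finset.sum_congr rfl fun j _ ↦ ?_
  have hsub : pderiv' j (fun y ↦ f y - g y) = fun y ↦ pderiv' j f y - pderiv' j g y :=
    funext fun y ↦ pderiv'_sub j (hdiff hf y) (hdiff hg y)
  rw [hsub, pderiv'_sub j (hdiff' j hf x) (hdiff' j hg x)]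

lemma lap_sum {ι : Type*} {s : Finset ι} {v : ι → 𝓔 n → ℝ} (hv : ∀ i, ContDiff ℝ 2 (v i))
    (x : 𝓔 n) : lap (fun y ↦ ∑ i ∈ s, v i y) x = ∑ i ∈ s, lap (v i) x := by
  simp only [lap]
  rw [Finset.sum_comm]
  refine Finset.sum_congr rfl fun j _ ↦ ?_
  have hsum : pderiv' j (fun y ↦ ∑ i ∈ s, v i y) = fun y ↦ ∑ i ∈ s, pderiv' j (v i) y :=
    funext fun y ↦ pderiv'_sum j fun i _ ↦ (hv i).differentiable (by norm_num) y
  rw [hsum, pderiv'_sum j fun i _ ↦ (contDiff_one_pderiv' j (hv i)).differentiable (by norm_num) x]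

/-- The divergence of a vector field given by its components. -/
noncomputable def divergence (F : Fin n → 𝓔 n → ℝ) (x : 𝓔 n) : ℝ := ∑ j, pderiv' j (F j) x

lemma continuous_divergence (hF : ∀ j, ContDiff ℝ 1 (F j)) : Continuous (divergence F) :=
  continuous_finsetSum _ fun j _ ↦ continuous_pderiv' j (hF j)

lemma hasCompactSupport_divergence (hFc : ∀ j, HasCompactSupport (F j)) :
    HasCompactSupport (divergence F) :=
  hasCompactSupport_sum fun j ↦ hasCompactSupport_pderiv' j (hFc j)

lemma gradient_apply (u : 𝓔 n → ℝ) (x : 𝓔 n) (j : Fin n) : gradient u x j = pderiv' j u x := by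
  have h : ⟪gradient u x, EuclideanSpace.single j 1⟫_ℝ = pderiv' j u x := by
    simp [gradient, pderiv']
  rw [← h, EuclideanSpace.inner_single_right]
  simp

lemma norm_gradient_sq (u : 𝓔 n → ℝ) (x : 𝓔 n) :
    ‖gradient u x‖ ^ 2 = ∑ j, pderiv' j u x ^ 2 := by
  simp [EuclideanSpace.norm_sq_eq, gradient_apply]

lemma contDiff_norm_gradient_sq (hu : ContDiff ℝ 2 u) :
    ContDiff ℝ 1 fun x ↦ ‖gradient u x‖ ^ 2 := by
  simp only [norm_gradient_sq]
  exact ContDiff.sum fun j _ ↦ (contDiff_one_pderiv' j hu).pow 2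

lemma gradient_eq_zero_of_notMem_tsupport (hx : x ∉ tsupport u) : gradient u x = 0 := by
  ext j
  simpa [gradient_apply] using
    image_eq_zero_of_notMem_tsupport fun h ↦ hx (tsupport_pderiv'_subset j u h)

/-- The Euler operator `x · ∇`, the generator of dilations. -/
noncomputable def euler (u : 𝓔 n → ℝ) (x : 𝓔 n) : ℝ := fderiv ℝ u x x

lemma euler_eq_sum (u : 𝓔 n → ℝ) (x : 𝓔 n) : euler u x = ∑ j, x j * pderiv' j u x := by
  have hx : ∑ j, x j • EuclideanSpace.single j 1 = x := by
    simpa using (EuclideanSpace.basisFun (Fin n) ℝ).sum_repr x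
  simpa [euler, pderiv', hx] using
    map_sum (fderiv ℝ u x) (fun j ↦ x j • EuclideanSpace.single j 1) Finset.univ

lemma inner_gradient_self (u : 𝓔 n → ℝ) (x : 𝓔 n) : ⟪gradient u x, x⟫_ℝ = euler u x :=
  inner_gradient_left

lemma euler_mul (hf : DifferentiableAt ℝ f x) (hg : DifferentiableAt ℝ g x) :
    euler (fun y ↦ f y * g y) x = f x * euler g x + euler f x * g x := by
  simp only [euler, fderiv_fun_mul hf hg, add_apply, smul_apply, smul_eq_mul, mul_comm]

lemma contDiff_euler (hu : ContDiff ℝ 2 u) : ContDiff ℝ 1 (euler u) :=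
  (hu.fderiv_right (m := 1) (by norm_num)).clm_apply contDiff_id

lemma continuous_euler (hu : ContDiff ℝ 1 u) : Continuous (euler u) :=
  (hu.continuous_fderiv (by norm_num)).clm_apply continuous_id

lemma hasCompactSupport_euler (hu : HasCompactSupport u) : HasCompactSupport (euler u) :=
  (hu.fderiv ℝ).mono fun x hx h ↦ hx (by simp [euler, h])

lemma pderiv'_euler (j : Fin n) (hu : ContDiff ℝ 2 u) (x : 𝓔 n) :
    pderiv' j (euler u) x = pderiv' j u x + euler (pderiv' j u) x := by
  have hdiff (i : Fin n) : DifferentiableAt ℝ (pderiv' i u) x :=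
    (contDiff_one_pderiv' i hu).differentiable (by norm_num) x
  have hcoord (i : Fin n) : DifferentiableAt ℝ (fun y : 𝓔 n ↦ y i) x :=
    (contDiff_coord (m := 1) i).differentiable (by norm_num) x
  rw [show euler u = fun y ↦ ∑ i, y i * pderiv' i u y from funext (euler_eq_sum u),
    pderiv'_sum j fun i _ ↦ (hcoord i).fun_mul (hdiff i), euler_eq_sum]
  simp only [pderiv'_mul j (hcoord _) (hdiff _), pderiv'_coord, Finset.sum_add_distrib, ite_mul,
    one_mul, zero_mul, Finset.sum_ite_eq', Finset.mem_univ, if_true, pderiv'_comm j _ hu, add_comm]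

lemma sum_pderiv'_euler_mul (hu : ContDiff ℝ 2 u) (x : 𝓔 n) :
    ∑ j, pderiv' j (euler u) x * pderiv' j u x
      = ‖gradient u x‖ ^ 2 + euler (fun y ↦ ‖gradient u y‖ ^ 2) x / 2 := by
  have hdiff (j : Fin n) : DifferentiableAt ℝ (pderiv' j u) x :=
    (contDiff_one_pderiv' j hu).differentiable (by norm_num) x
  have heuler : euler (fun y ↦ ‖gradient u y‖ ^ 2) x
      = ∑ j, 2 * (euler (pderiv' j u) x * pderiv' j u x) := by
    simp only [norm_gradient_sq]
    simp only [sq]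
    rw [euler, fderiv_fun_sum fun j _ ↦ (hdiff j).fun_mul (hdiff j), sum_apply]
    refine Finset.sum_congr rfl fun j _ ↦ (euler_mul (hdiff j) (hdiff j)).trans (by ring)
  rw [heuler, norm_gradient_sq, ← Finset.mul_sum, mul_div_cancel_left₀ _ two_ne_zero,
    ← Finset.sum_add_distrib]
  exact Finset.sum_congr rfl fun j _ ↦ by rw [pderiv'_euler j hu]; ring

lemma integral_mul_divergence (hg : ContDiff ℝ 1 g) (hc : HasCompactSupport g)
    (hF : ∀ j, ContDiff ℝ 1 (F j)) :
    ∫ x, g x * divergence F x = -∫ x, ∑ j, pderiv' j g x * F j x := by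
  have hint (j : Fin n) : Integrable fun x ↦ g x * pderiv' j (F j) x :=
    (hg.continuous.mul (continuous_pderiv' j (hF j))).integrable_of_hasCompactSupport hc.mul_right
  have hint' (j : Fin n) : Integrable fun x ↦ pderiv' j g x * F j x :=
    ((continuous_pderiv' j hg).mul (hF j).continuous).integrable_of_hasCompactSupport
      (hasCompactSupport_pderiv' j hc).mul_right
  have hint₀ (j : Fin n) : Integrable fun x ↦ g x * F j x :=
    (hg.continuous.mul (hF j).continuous).integrable_of_hasCompactSupport hc.mul_right
  simp only [divergence, Finset.mul_sum]
  rw [integral_finsetSum _ fun j _ ↦ hint j, integral_finsetSum _ fun j _ ↦ hint' j,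
    ← Finset.sum_neg_distrib]
  exact Finset.sum_congr rfl fun j _ ↦ integral_mul_fderiv_eq_neg_fderiv_mul_of_integrable
    (hint' j) (hint j) (hint₀ j) (fun _ _ ↦ hg.differentiable (by norm_num) _)
    fun _ _ ↦ (hF j).differentiable (by norm_num) _

lemma norm_rpow_add_two (x : 𝓔 n) {p : ℝ} (hp : 0 ≤ p) : ‖x‖ ^ (p + 2) = ‖x‖ ^ p * ‖x‖ ^ 2 := by
  rw [rpow_add_of_nonneg (norm_nonneg x) hp (by norm_num), rpow_two]

lemma divergence_norm_rpow_mul_coord (x : 𝓔 n) {p : ℝ} (hp : 1 < p) :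
    divergence (fun (j : Fin n) y ↦ ‖y‖ ^ p * y j) x = (n + p) * ‖x‖ ^ p := by
  have hnorm : DifferentiableAt ℝ (fun y : 𝓔 n ↦ ‖y‖ ^ p) x :=
    (hasFDerivAt_norm_rpow x hp).differentiableAt
  have hcoord (j : Fin n) : DifferentiableAt ℝ (fun y : 𝓔 n ↦ y j) x :=
    (contDiff_coord (m := 1) j).differentiable (by norm_num) x
  have hpow : ‖x‖ ^ (p - 2) * ‖x‖ ^ 2 = ‖x‖ ^ p := by
    rcases eq_or_ne x 0 with rfl | hx
    · simp [zero_rpow (by linarith : p ≠ 0)]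
    · rw [← rpow_two, ← rpow_add (norm_pos_iff.2 hx), sub_add_cancel]
  have hterm (j : Fin n) : pderiv' j (fun y ↦ ‖y‖ ^ p * y j) x
      = ‖x‖ ^ p + p * ‖x‖ ^ (p - 2) * x j ^ 2 := by
    rw [pderiv'_mul j hnorm (hcoord j), pderiv'_coord, if_pos rfl, pderiv'_norm_rpow j x hp]
    ring
  calc divergence (fun (j : Fin n) y ↦ ‖y‖ ^ p * y j) x
      = n * ‖x‖ ^ p + p * ‖x‖ ^ (p - 2) * ∑ j, x j ^ 2 := by
        simp [divergence, hterm, Finset.sum_add_distrib, Finset.mul_sum]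
    _ = n * ‖x‖ ^ p + p * (‖x‖ ^ (p - 2) * ‖x‖ ^ 2) := by
        simp [EuclideanSpace.norm_sq_eq, mul_assoc]
    _ = (n + p) * ‖x‖ ^ p := by rw [hpow]; ring

lemma integral_norm_rpow_mul_euler {p : ℝ} (hp : 1 < p) (hu : ContDiff ℝ 1 u)
    (hc : HasCompactSupport u) :
    ∫ x, ‖x‖ ^ p * euler u x = -((n + p) * ∫ x, ‖x‖ ^ p * u x) := by
  have hV (j : Fin n) : ContDiff ℝ 1 fun y : 𝓔 n ↦ ‖y‖ ^ p * y j :=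
    (contDiff_norm_rpow hp).mul (contDiff_coord j)
  have h := integral_mul_divergence hu hc hV
  simp only [divergence_norm_rpow_mul_coord _ hp] at h
  calc ∫ x, ‖x‖ ^ p * euler u x = ∫ x, ∑ j, pderiv' j u x * (‖x‖ ^ p * x j) := by
        congr 1; ext x
        rw [euler_eq_sum, Finset.mul_sum]
        exact Finset.sum_congr rfl fun j _ ↦ by ring
    _ = -∫ x, u x * ((n + p) * ‖x‖ ^ p) := by rw [h, neg_neg]
    _ = -((n + p) * ∫ x, ‖x‖ ^ p * u x) := by
        rw [← integral_const_mul]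
        congr 2; ext x; ring

end Calculus

section Energy

variable {n : ℕ} {W a f g h : 𝓔 n → ℝ} {F : Fin n → 𝓔 n → ℝ} {M : ℝ}

/-- The squared weighted norm `∫ W g²`, the quadratic form in which all the estimates are
phrased. -/
noncomputable def energy (W g : 𝓔 n → ℝ) : ℝ := ∫ x, W x * g x ^ 2

lemma energy_nonneg (hW : ∀ x, 0 ≤ W x) (g : 𝓔 n → ℝ) : 0 ≤ energy W g :=
  integral_nonneg fun x ↦ mul_nonneg (hW x) (sq_nonneg _)

lemma continuous_norm_rpow {p : ℝ} (hp : 0 ≤ p) : Continuous fun x : 𝓔 n ↦ ‖x‖ ^ p :=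
  continuous_norm.rpow_const fun _ ↦ Or.inr hp

lemma integrable_norm_rpow_mul {p : ℝ} (hp : 0 ≤ p) (hg : Continuous g)
    (hc : HasCompactSupport g) : Integrable fun x ↦ ‖x‖ ^ p * g x :=
  ((continuous_norm_rpow hp).mul hg).integrable_of_hasCompactSupport hc.mul_left

lemma integrable_mul_sq (hW : Continuous W) (hg : Continuous g) (hc : HasCompactSupport g) :
    Integrable fun x ↦ W x * g x ^ 2 :=
  (hW.mul (hg.pow 2)).integrable_of_hasCompactSupport
    (hc.mono fun x hx h ↦ hx (by simp [h]))

lemma integral_norm_rpow_mul_mul_divergence {p : ℝ} (hp : 0 ≤ p)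
    (hg : ContDiff ℝ 1 g) (hc : HasCompactSupport g) (hF : ∀ j, ContDiff ℝ 1 (F j)) :
    ∫ x, ‖x‖ ^ (p + 2) * (g x * divergence F x)
      = -(∫ x, ‖x‖ ^ (p + 2) * ∑ j, pderiv' j g x * F j x)
        - (p + 2) * ∫ x, ‖x‖ ^ p * (g x * ∑ j, x j * F j x) := by
  have hnorm : ContDiff ℝ 1 fun x : 𝓔 n ↦ ‖x‖ ^ (p + 2) := contDiff_norm_rpow (by linarith)
  have hsum (x : 𝓔 n) : ∑ j, pderiv' j (fun y ↦ ‖y‖ ^ (p + 2) * g y) x * F j x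
      = ‖x‖ ^ (p + 2) * ∑ j, pderiv' j g x * F j x
        + (p + 2) * (‖x‖ ^ p * (g x * ∑ j, x j * F j x)) := by
    simp only [Finset.mul_sum, ← Finset.sum_add_distrib]
    refine Finset.sum_congr rfl fun j _ ↦ ?_
    rw [pderiv'_mul j (hnorm.differentiable (by norm_num) x) (hg.differentiable (by norm_num) x),
      pderiv'_norm_rpow j x (by linarith), add_sub_cancel_right]
    ring
  have icoord : Integrable fun x ↦ ‖x‖ ^ p * (g x * ∑ j, x j * F j x) :=
    integrable_norm_rpow_mul hp (hg.continuous.mul (continuous_finsetSum _ fun j _ ↦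
      (contDiff_coord (m := 1) j).continuous.mul (hF j).continuous)) hc.mul_right
  have igrad : Integrable fun x ↦ ‖x‖ ^ (p + 2) * ∑ j, pderiv' j g x * F j x := by
    refine integrable_norm_rpow_mul (by linarith) (continuous_finsetSum _ fun j _ ↦
      (continuous_pderiv' j hg).mul (hF j).continuous)
      (HasCompactSupport.intro hc fun x hx ↦ Finset.sum_eq_zero fun j _ ↦ ?_)
    rw [image_eq_zero_of_notMem_tsupport fun h ↦ hx (tsupport_pderiv'_subset j g h), zero_mul]
  have hibp := integral_mul_divergence (hnorm.mul hg) hc.mul_left hF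
  simp only [hsum, mul_assoc] at hibp
  rw [hibp, integral_add igrad (icoord.const_mul _), integral_const_mul]
  ring

lemma energy_le_const_mul_energy {W' : 𝓔 n → ℝ} {c : ℝ} (hW : Continuous W) (hW' : Continuous W')
    (hg : Continuous g) (hc : HasCompactSupport g) (hle : ∀ x, g x ≠ 0 → W x ≤ c * W' x) :
    energy W g ≤ c * energy W' g := by
  rw [energy, energy, ← integral_const_mul]
  refine integral_mono (integrable_mul_sq hW hg hc) ((integrable_mul_sq hW' hg hc).const_mul c)
    fun x ↦ ?_
  rcases eq_or_ne (g x) 0 with hx | hx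
  · simp [hx]
  · simpa only [mul_assoc] using mul_le_mul_of_nonneg_right (hle x hx) (sq_nonneg (g x))

lemma energy_add_le (hW : Continuous W) (hW₀ : ∀ x, 0 ≤ W x) (hg : Continuous g)
    (hgc : HasCompactSupport g) (hh : Continuous h) (hhc : HasCompactSupport h) :
    energy W (fun x ↦ g x + h x) ≤ 2 * (energy W g + energy W h) := by
  have ig := integrable_mul_sq hW hg hgc
  have ih := integrable_mul_sq hW hh hhc
  rw [energy, energy, energy, ← integral_add ig ih, ← integral_const_mul]
  refine integral_mono (integrable_mul_sq hW (hg.add hh) (hgc.add hhc))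
    ((ig.add ih).const_mul 2) fun x ↦ ?_
  have := hW₀ x
  linear_combination W x * add_sq_le (a := g x) (b := h x)

lemma energy_sum_le {ι : Type*} [Fintype ι] {v : ι → 𝓔 n → ℝ} (hW : Continuous W)
    (hW₀ : ∀ x, 0 ≤ W x) (hv : ∀ i, Continuous (v i)) (hvc : ∀ i, HasCompactSupport (v i)) :
    energy W (fun x ↦ ∑ i, v i x) ≤ Fintype.card ι * ∑ i, energy W (v i) := by
  have iv (i : ι) := integrable_mul_sq hW (hv i) (hvc i)
  simp only [energy]
  rw [← integral_finsetSum _ fun i _ ↦ iv i, ← integral_const_mul]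
  refine integral_mono
    (integrable_mul_sq hW (continuous_finsetSum _ fun i _ ↦ hv i) (hasCompactSupport_sum hvc))
    ((integrable_finsetSum _ fun i _ ↦ iv i).const_mul _) fun x ↦ ?_
  simp only [← Finset.mul_sum, ← Finset.card_univ]
  have := hW₀ x
  linear_combination W x * sq_sum_le_card_mul_sum_sq (s := Finset.univ) (f := fun i ↦ v i x)

lemma energy_mul_le (hW : Continuous W) (hW₀ : ∀ x, 0 ≤ W x) (hg : Continuous g)
    (hgc : HasCompactSupport g) (ha : ∀ x, |a x| ≤ M) :
    energy W (fun x ↦ a x * g x) ≤ M ^ 2 * energy W g := by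
  rw [energy, energy, ← integral_const_mul]
  refine integral_mono_of_nonneg (.of_forall fun x ↦ mul_nonneg (hW₀ x) (sq_nonneg _))
    ((integrable_mul_sq hW hg hgc).const_mul _) (.of_forall fun x ↦ ?_)
  have := hW₀ x
  linear_combination (W x * g x ^ 2) * sq_le_sq' (abs_le.1 (ha x)).1 (abs_le.1 (ha x)).2

lemma energy_add_add_le (hW : Continuous W) (hW₀ : ∀ x, 0 ≤ W x) (hf : Continuous f)
    (hfc : HasCompactSupport f) (hg : Continuous g) (hgc : HasCompactSupport g)
    (hh : Continuous h) (hhc : HasCompactSupport h) :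
    energy W (fun x ↦ f x + g x + h x) ≤ 4 * (energy W f + energy W g) + 2 * energy W h := by
  have hfg := energy_add_le hW hW₀ hf hfc hg hgc
  have hfgh : energy W (fun x ↦ f x + g x + h x)
      ≤ 2 * (energy W (fun x ↦ f x + g x) + energy W h) :=
    energy_add_le hW hW₀ (hf.add hg) (hfc.add hgc) hh hhc
  linarith

lemma neg_integral_norm_rpow_mul_le {a b p r : ℝ} (ha : 0 ≤ a) (hb : 0 ≤ b) (hab : a + b = 2 * p)
    (hr : 0 < r) (hg : Continuous g) (hgc : HasCompactSupport g) (hh : Continuous h)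
    (hhc : HasCompactSupport h) :
    -∫ x, ‖x‖ ^ p * (g x * h x)
      ≤ r * energy (fun x ↦ ‖x‖ ^ a) g + (4 * r)⁻¹ * energy (fun x ↦ ‖x‖ ^ b) h := by
  have ig := integrable_mul_sq (continuous_norm_rpow ha) hg hgc
  have ih := integrable_mul_sq (continuous_norm_rpow hb) hh hhc
  have igh : Integrable fun x ↦ ‖x‖ ^ p * (g x * h x) :=
    integrable_norm_rpow_mul (by linarith) (hg.mul hh) hgc.mul_right
  rw [energy, energy, ← integral_const_mul, ← integral_const_mul, ← integral_neg,
    ← integral_add (ig.const_mul r) (ih.const_mul _)]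
  refine integral_mono igh.neg ((ig.const_mul r).add (ih.const_mul _)) fun x ↦ ?_
  have split {s t : ℝ} (hs : 0 ≤ s) (ht : 0 ≤ t) :
      ‖x‖ ^ ((s + t) / 2) = ‖x‖ ^ (s / 2) * ‖x‖ ^ (t / 2) := by
    rw [add_div, rpow_add_of_nonneg (norm_nonneg x) (by positivity) (by positivity)]
  have hxa : ‖x‖ ^ a = ‖x‖ ^ (a / 2) * ‖x‖ ^ (a / 2) := by simpa using split ha ha
  have hxb : ‖x‖ ^ b = ‖x‖ ^ (b / 2) * ‖x‖ ^ (b / 2) := by simpa using split hb hb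
  have hxp : ‖x‖ ^ p = ‖x‖ ^ (a / 2) * ‖x‖ ^ (b / 2) := by simpa [hab] using split ha hb
  simp only [hxa, hxb, hxp]
  have hsq : 0 ≤ (4 * r)⁻¹ * (2 * r * ‖x‖ ^ (a / 2) * g x + ‖x‖ ^ (b / 2) * h x) ^ 2 := by
    positivity
  have hr' : (4 * r)⁻¹ * r = 1 / 4 := by field_simp
  linear_combination hsq + (4 * r * (‖x‖ ^ (a / 2) * g x) ^ 2
    + 4 * (‖x‖ ^ (a / 2) * g x) * (‖x‖ ^ (b / 2) * h x)) * hr'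

end Energy

section Carleman

variable {n : ℕ} {q u : 𝓔 n → ℝ} {p τ : ℝ}

/-- The multiplier `x · ∇u + (τ + n/2) u` against which the equation is tested; the constant
`τ + n/2` makes it orthogonal to `u` for the weight `‖x‖ ^ (2τ)`. -/
noncomputable def carlemanMultiplier (τ : ℝ) (u : 𝓔 n → ℝ) (x : 𝓔 n) : ℝ :=
  euler u x + (τ + n / 2) * u x

lemma contDiff_carlemanMultiplier (τ : ℝ) (hu : ContDiff ℝ 2 u) :
    ContDiff ℝ 1 (carlemanMultiplier τ u) :=
  (contDiff_euler hu).add (contDiff_const.mul (hu.of_le (by norm_num)))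

lemma hasCompactSupport_carlemanMultiplier (τ : ℝ) (hc : HasCompactSupport u) :
    HasCompactSupport (carlemanMultiplier τ u) :=
  (hasCompactSupport_euler hc).add hc.mul_left

lemma integral_norm_rpow_mul_carlemanMultiplier_mul (hp : 1 < p) (τ : ℝ) (hq : ContDiff ℝ 1 q)
    (hu : ContDiff ℝ 1 u) (hc : HasCompactSupport u) :
    ∫ x, ‖x‖ ^ p * (carlemanMultiplier τ u x * (q x * u x))
      = (τ - p / 2) * (∫ x, ‖x‖ ^ p * (q x * u x ^ 2))
        - 1 / 2 * ∫ x, ‖x‖ ^ p * (euler q x * u x ^ 2) := by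
  have hp₀ : 0 ≤ p := by linarith
  have hc₂ : HasCompactSupport fun x ↦ u x ^ 2 := hc.comp_left (zero_pow two_ne_zero)
  have hqu : ContDiff ℝ 1 fun x ↦ q x * u x ^ 2 := hq.mul (hu.pow 2)
  have ieuler : Integrable fun x ↦ ‖x‖ ^ p * euler (fun y ↦ q y * u y ^ 2) x :=
    integrable_norm_rpow_mul hp₀ (continuous_euler hqu) (hasCompactSupport_euler hc₂.mul_left)
  have iqu : Integrable fun x ↦ ‖x‖ ^ p * (q x * u x ^ 2) :=
    integrable_norm_rpow_mul hp₀ hqu.continuous hc₂.mul_left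
  have ieq : Integrable fun x ↦ ‖x‖ ^ p * (euler q x * u x ^ 2) :=
    integrable_norm_rpow_mul hp₀ ((continuous_euler hq).mul (hu.pow 2).continuous) hc₂.mul_left
  have split (x : 𝓔 n) : ‖x‖ ^ p * (carlemanMultiplier τ u x * (q x * u x))
      = 1 / 2 * (‖x‖ ^ p * euler (fun y ↦ q y * u y ^ 2) x)
        + (τ + n / 2) * (‖x‖ ^ p * (q x * u x ^ 2))
        - 1 / 2 * (‖x‖ ^ p * (euler q x * u x ^ 2)) := by
    have hq' : DifferentiableAt ℝ q x := hq.differentiable (by norm_num) x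
    have hu' : DifferentiableAt ℝ u x := hu.differentiable (by norm_num) x
    simp only [sq, euler_mul hq' (hu'.fun_mul hu'), euler_mul hu' hu', carlemanMultiplier]
    ring
  simp only [split]
  rw [integral_sub ((ieuler.const_mul _).fun_add (iqu.const_mul _)) (ieq.const_mul _),
    integral_add (ieuler.const_mul _) (iqu.const_mul _), integral_const_mul, integral_const_mul,
    integral_const_mul, integral_norm_rpow_mul_euler hp hqu hc₂.mul_left]
  ring

-- With `‖x‖ ^ (2τ+2)` the contributions of the full gradient cancel after the Rellich identity.
lemma integral_norm_rpow_mul_sum_pderiv'_carlemanMultiplier (hτ : 1 < 2 * τ + 2)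
    (hu : ContDiff ℝ 2 u) (hc : HasCompactSupport u) :
    ∫ x, ‖x‖ ^ (2 * τ + 2) * ∑ j, pderiv' j (carlemanMultiplier τ u) x * pderiv' j u x = 0 := by
  have hu₁ : ContDiff ℝ 1 u := hu.of_le (by norm_num)
  have hsum (x : 𝓔 n) : ∑ j, pderiv' j (carlemanMultiplier τ u) x * pderiv' j u x
      = (τ + n / 2 + 1) * ‖gradient u x‖ ^ 2 + 1 / 2 * euler (fun y ↦ ‖gradient u y‖ ^ 2) x := by
    have hj (j : Fin n) : pderiv' j (carlemanMultiplier τ u) x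
        = pderiv' j (euler u) x + (τ + n / 2) * pderiv' j u x := by
      have hu' : DifferentiableAt ℝ u x := hu₁.differentiable (by norm_num) x
      rw [← pderiv'_const_mul j _ hu']
      exact pderiv'_add j ((contDiff_euler hu).differentiable (by norm_num) x) (hu'.const_mul _)
    simp only [hj, add_mul, Finset.sum_add_distrib, sum_pderiv'_euler_mul hu, mul_assoc, ← sq,
      ← Finset.mul_sum, ← norm_gradient_sq]
    ring
  have hgrad := contDiff_norm_gradient_sq hu
  have hcgrad : HasCompactSupport fun x ↦ ‖gradient u x‖ ^ 2 :=
    HasCompactSupport.intro hc fun x hx ↦ by simp [gradient_eq_zero_of_notMem_tsupport hx]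
  have hp₀ : 0 ≤ 2 * τ + 2 := by linarith
  simp only [hsum, mul_add, mul_left_comm _ (τ + n / 2 + 1 : ℝ), mul_left_comm _ (1 / 2 : ℝ)]
  rw [integral_add ((integrable_norm_rpow_mul hp₀ hgrad.continuous hcgrad).const_mul _)
      ((integrable_norm_rpow_mul hp₀ (continuous_euler hgrad)
        (hasCompactSupport_euler hcgrad)).const_mul _),
    integral_const_mul, integral_const_mul, integral_norm_rpow_mul_euler hτ hgrad hcgrad]
  ring

lemma integral_norm_rpow_mul_carlemanMultiplier_mul_euler (hτ : 1 < 2 * τ) (hu : ContDiff ℝ 2 u)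
    (hc : HasCompactSupport u) :
    ∫ x, ‖x‖ ^ (2 * τ) * (carlemanMultiplier τ u x * euler u x)
      = energy (fun x ↦ ‖x‖ ^ (2 * τ)) (carlemanMultiplier τ u) := by
  have hM := (contDiff_carlemanMultiplier τ hu).continuous
  have hMc : HasCompactSupport (carlemanMultiplier τ u) :=
    hasCompactSupport_carlemanMultiplier τ hc
  have iM : Integrable fun x ↦ ‖x‖ ^ (2 * τ) * carlemanMultiplier τ u x ^ 2 :=
    integrable_mul_sq (continuous_norm_rpow (by linarith)) hM hMc
  have iMu : Integrable fun x ↦ ‖x‖ ^ (2 * τ) * (carlemanMultiplier τ u x * u x) :=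
    integrable_norm_rpow_mul (by linarith) (hM.mul hu.continuous) hMc.mul_right
  have horth : ∫ x, ‖x‖ ^ (2 * τ) * (carlemanMultiplier τ u x * u x) = 0 := by
    simpa [euler] using integral_norm_rpow_mul_carlemanMultiplier_mul (q := fun _ ↦ 1) hτ τ
      contDiff_const (hu.of_le (by norm_num)) hc
  have split (x : 𝓔 n) : ‖x‖ ^ (2 * τ) * (carlemanMultiplier τ u x * euler u x)
      = ‖x‖ ^ (2 * τ) * carlemanMultiplier τ u x ^ 2
        - (τ + n / 2) * (‖x‖ ^ (2 * τ) * (carlemanMultiplier τ u x * u x)) := by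
    rw [show euler u x = carlemanMultiplier τ u x - (τ + n / 2) * u x by
      simp [carlemanMultiplier]]
    ring
  simp only [split]
  rw [integral_sub iM (iMu.const_mul _), integral_const_mul, horth, mul_zero, sub_zero, energy]

lemma integral_norm_rpow_mul_carlemanMultiplier_mul_lap (hτ : 1 < 2 * τ) (hu : ContDiff ℝ 2 u)
    (hc : HasCompactSupport u) :
    ∫ x, ‖x‖ ^ (2 * τ + 2) * (carlemanMultiplier τ u x * lap u x)
      = -((2 * τ + 2) * energy (fun x ↦ ‖x‖ ^ (2 * τ)) (carlemanMultiplier τ u)) := by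
  change ∫ x, ‖x‖ ^ (2 * τ + 2) *
    (carlemanMultiplier τ u x * divergence (fun j ↦ pderiv' j u) x) = _
  rw [integral_norm_rpow_mul_mul_divergence (by linarith) (contDiff_carlemanMultiplier τ hu)
    (hasCompactSupport_carlemanMultiplier τ hc) fun j ↦ contDiff_one_pderiv' j hu,
    integral_norm_rpow_mul_sum_pderiv'_carlemanMultiplier (by linarith) hu hc]
  simp only [← euler_eq_sum]
  rw [integral_norm_rpow_mul_carlemanMultiplier_mul_euler hτ hu hc]
  ring

lemma integral_norm_rpow_mul_carlemanMultiplier_mul_le (hτ : 1 < 2 * τ) (k : ℝ)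
    (hu : ContDiff ℝ 2 u) (hc : HasCompactSupport u) (hq : ContDiff ℝ 1 q)
    (hqe : ∀ x, 0 ≤ euler q x) :
    ∫ x, ‖x‖ ^ (2 * τ + 2) * (carlemanMultiplier τ u x * (lap u x + k ^ 2 * q x * u x))
      ≤ -(2 * τ + 2) * energy (fun x ↦ ‖x‖ ^ (2 * τ)) (carlemanMultiplier τ u)
        - k ^ 2 * energy (fun x ↦ q x * ‖x‖ ^ (2 * τ + 2)) u := by
  set M := carlemanMultiplier τ u
  have hM : Continuous M := (contDiff_carlemanMultiplier τ hu).continuous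
  have hMc : HasCompactSupport M := hasCompactSupport_carlemanMultiplier τ hc
  have iML : Integrable fun x ↦ ‖x‖ ^ (2 * τ + 2) * (M x * lap u x) :=
    integrable_norm_rpow_mul (by linarith) (hM.mul (continuous_lap hu)) hMc.mul_right
  have iMq : Integrable fun x ↦ ‖x‖ ^ (2 * τ + 2) * (M x * (q x * u x)) :=
    integrable_norm_rpow_mul (by linarith) (hM.mul (hq.continuous.mul hu.continuous)) hMc.mul_right
  have hpot : ∫ x, ‖x‖ ^ (2 * τ + 2) * (M x * (q x * u x))
      ≤ -energy (fun x ↦ q x * ‖x‖ ^ (2 * τ + 2)) u := by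
    have hE : 0 ≤ ∫ x, ‖x‖ ^ (2 * τ + 2) * (euler q x * u x ^ 2) :=
      integral_nonneg fun x ↦ mul_nonneg (by positivity) (mul_nonneg (hqe x) (sq_nonneg _))
    have hQ : energy (fun x ↦ q x * ‖x‖ ^ (2 * τ + 2)) u
        = ∫ x, ‖x‖ ^ (2 * τ + 2) * (q x * u x ^ 2) := by
      rw [energy]; congr 1; ext x; ring
    rw [integral_norm_rpow_mul_carlemanMultiplier_mul (by linarith) τ hq
      (hu.of_le (by norm_num)) hc, hQ]
    linarith
  calc ∫ x, ‖x‖ ^ (2 * τ + 2) * (M x * (lap u x + k ^ 2 * q x * u x))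
      = (∫ x, ‖x‖ ^ (2 * τ + 2) * (M x * lap u x))
        + k ^ 2 * ∫ x, ‖x‖ ^ (2 * τ + 2) * (M x * (q x * u x)) := by
        rw [← integral_const_mul, ← integral_add iML (iMq.const_mul _)]
        congr 1; ext x; ring
    _ ≤ _ := by
        rw [integral_norm_rpow_mul_carlemanMultiplier_mul_lap hτ hu hc]
        linarith [mul_le_mul_of_nonneg_left hpot (sq_nonneg k)]

lemma energy_carlemanMultiplier_add_le (hτ : 1 < 2 * τ) (k : ℝ) (hu : ContDiff ℝ 2 u)
    (hc : HasCompactSupport u) (hq : ContDiff ℝ 1 q) (hqe : ∀ x, 0 ≤ euler q x) :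
    4 * (τ + 1) ^ 2 * energy (fun x ↦ ‖x‖ ^ (2 * τ)) (carlemanMultiplier τ u)
        + 4 * (τ + 1) * k ^ 2 * energy (fun x ↦ q x * ‖x‖ ^ (2 * τ + 2)) u
      ≤ energy (fun x ↦ ‖x‖ ^ (2 * τ + 4)) fun x ↦ lap u x + k ^ 2 * q x * u x := by
  set A := energy (fun x ↦ ‖x‖ ^ (2 * τ)) (carlemanMultiplier τ u)
  set Q := energy (fun x ↦ q x * ‖x‖ ^ (2 * τ + 2)) u
  set G := energy (fun x ↦ ‖x‖ ^ (2 * τ + 4)) fun x ↦ lap u x + k ^ 2 * q x * u x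
  have hcont : Continuous fun x ↦ lap u x + k ^ 2 * q x * u x :=
    (continuous_lap hu).add ((continuous_const.mul hq.continuous).mul hu.continuous)
  have htest := integral_norm_rpow_mul_carlemanMultiplier_mul_le hτ k hu hc hq hqe
  have hamgm := neg_integral_norm_rpow_mul_le (p := 2 * τ + 2) (a := 2 * τ) (b := 2 * τ + 4)
    (r := τ + 1) (by linarith) (by linarith) (by ring) (by linarith)
    (contDiff_carlemanMultiplier τ hu).continuous (hasCompactSupport_carlemanMultiplier τ hc)
    hcont ((hasCompactSupport_lap hc).add hc.mul_left)
  calc 4 * (τ + 1) ^ 2 * A + 4 * (τ + 1) * k ^ 2 * Q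
      = 4 * (τ + 1) * ((τ + 1) * A + k ^ 2 * Q) := by ring
    _ ≤ 4 * (τ + 1) * ((4 * (τ + 1))⁻¹ * G) := by gcongr <;> linarith
    _ = G := by rw [mul_inv_cancel_left₀]; linarith

lemma energy_le_energy_carlemanMultiplier (hτ : 1 < 2 * τ) {R : ℝ} (hR : 0 < R)
    (hu : ContDiff ℝ 2 u) (hc : HasCompactSupport u) (hsupp : ∀ x, u x ≠ 0 → ‖x‖ ≤ R) :
    energy (fun x ↦ ‖x‖ ^ (2 * τ + 2)) u
      ≤ R ^ 2 * energy (fun x ↦ ‖x‖ ^ (2 * τ)) (carlemanMultiplier τ u) := by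
  have hid : ∫ x, ‖x‖ ^ (2 * τ + 2) * (carlemanMultiplier τ u x * u x)
      = -energy (fun x ↦ ‖x‖ ^ (2 * τ + 2)) u := by
    have h := integral_norm_rpow_mul_carlemanMultiplier_mul (q := fun _ ↦ 1) (p := 2 * τ + 2)
      (by linarith) τ contDiff_const (hu.of_le (by norm_num)) hc
    simp only [euler, fderiv_fun_const, Pi.zero_apply, zero_apply, zero_mul, mul_zero,
      integral_zero, one_mul] at h
    rw [h, energy]
    ring
  have hamgm := neg_integral_norm_rpow_mul_le (p := 2 * τ + 2) (a := 2 * τ) (b := 2 * τ + 4)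
    (r := R ^ 2 / 2) (by linarith) (by linarith) (by ring) (by positivity)
    (contDiff_carlemanMultiplier τ hu).continuous (hasCompactSupport_carlemanMultiplier τ hc)
    hu.continuous hc
  have hweight : energy (fun x ↦ ‖x‖ ^ (2 * τ + 4)) u
      ≤ R ^ 2 * energy (fun x ↦ ‖x‖ ^ (2 * τ + 2)) u := by
    refine energy_le_const_mul_energy (continuous_norm_rpow (by linarith))
      (continuous_norm_rpow (by linarith)) hu.continuous hc fun x hx ↦ ?_
    rw [show 2 * τ + 4 = 2 * τ + 2 + 2 by ring, norm_rpow_add_two x (by linarith), mul_comm]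
    gcongr
    exact hsupp x hx
  have hhalf : (4 * (R ^ 2 / 2))⁻¹ * energy (fun x ↦ ‖x‖ ^ (2 * τ + 4)) u
      ≤ 1 / 2 * energy (fun x ↦ ‖x‖ ^ (2 * τ + 2)) u := by
    refine (mul_le_mul_of_nonneg_left hweight (by positivity)).trans_eq ?_
    field_simp
    ring
  linarith

lemma sq_mul_energy_add_le (hτ : 1 < 2 * τ) (k : ℝ) {R : ℝ} (hR : 0 < R) (hu : ContDiff ℝ 2 u)
    (hc : HasCompactSupport u) (hsupp : ∀ x, u x ≠ 0 → ‖x‖ ≤ R) (hq : ContDiff ℝ 1 q)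
    (hqe : ∀ x, 0 ≤ euler q x) :
    4 * τ ^ 2 / R ^ 2 * energy (fun x ↦ ‖x‖ ^ (2 * τ + 2)) u
        + 4 * (τ + 1) * k ^ 2 * energy (fun x ↦ q x * ‖x‖ ^ (2 * τ + 2)) u
      ≤ energy (fun x ↦ ‖x‖ ^ (2 * τ + 4)) fun x ↦ lap u x + k ^ 2 * q x * u x := by
  have hpoinc := energy_le_energy_carlemanMultiplier hτ hR hu hc hsupp
  have hmult := energy_carlemanMultiplier_add_le hτ k hu hc hq hqe
  have h₀ := energy_nonneg (W := fun x : 𝓔 n ↦ ‖x‖ ^ (2 * τ)) (fun x ↦ by positivity)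
    (carlemanMultiplier τ u)
  have hfirst : 4 * τ ^ 2 / R ^ 2 * energy (fun x ↦ ‖x‖ ^ (2 * τ + 2)) u
      ≤ 4 * (τ + 1) ^ 2 * energy (fun x ↦ ‖x‖ ^ (2 * τ)) (carlemanMultiplier τ u) := by
    calc 4 * τ ^ 2 / R ^ 2 * energy (fun x ↦ ‖x‖ ^ (2 * τ + 2)) u
        ≤ 4 * τ ^ 2 / R ^ 2
          * (R ^ 2 * energy (fun x ↦ ‖x‖ ^ (2 * τ)) (carlemanMultiplier τ u)) := by gcongr
      _ = 4 * τ ^ 2 * energy (fun x ↦ ‖x‖ ^ (2 * τ)) (carlemanMultiplier τ u) := by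
        field_simp
      _ ≤ _ := by gcongr <;> linarith
  linarith

end Carleman

section Gradient

variable {n : ℕ} {W f q u : 𝓔 n → ℝ} {F V : Fin n → 𝓔 n → ℝ} {k p : ℝ}

lemma energy_norm_gradient (hW : Continuous W) (hu : ContDiff ℝ 1 u) (hc : HasCompactSupport u) :
    energy W (fun x ↦ ‖gradient u x‖) = ∑ j, energy W (pderiv' j u) := by
  simp only [energy, norm_gradient_sq, Finset.mul_sum]
  exact integral_finsetSum _ fun j _ ↦
    integrable_mul_sq hW (continuous_pderiv' j hu) (hasCompactSupport_pderiv' j hc)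

lemma energy_sum_coord_mul_le (hp : 0 ≤ p) (hV : ∀ j, Continuous (V j))
    (hVc : ∀ j, HasCompactSupport (V j)) :
    energy (fun x ↦ ‖x‖ ^ p) (fun x ↦ ∑ j, x j * V j x)
      ≤ ∑ j, energy (fun x ↦ ‖x‖ ^ (p + 2)) (V j) := by
  have iV (j : Fin n) : Integrable fun x ↦ ‖x‖ ^ (p + 2) * V j x ^ 2 :=
    integrable_mul_sq (continuous_norm_rpow (by linarith)) (hV j) (hVc j)
  simp only [energy]
  rw [← integral_finsetSum _ fun j _ ↦ iV j]
  refine integral_mono_of_nonneg (.of_forall fun x ↦ by positivity)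
    (integrable_finsetSum _ fun j _ ↦ iV j) (.of_forall fun x ↦ ?_)
  calc ‖x‖ ^ p * (∑ j, x j * V j x) ^ 2
      ≤ ‖x‖ ^ p * ((∑ j, x j ^ 2) * ∑ j, V j x ^ 2) := by
        gcongr
        exact Finset.sum_mul_sq_le_sq_mul_sq _ _ _
    _ = ∑ j, ‖x‖ ^ (p + 2) * V j x ^ 2 := by
        rw [norm_rpow_add_two x hp, ← Finset.mul_sum, EuclideanSpace.norm_sq_eq, mul_assoc]
        simp

lemma neg_integral_norm_rpow_mul_sum_coord_mul_le (hp : 0 ≤ p) (hu : Continuous u)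
    (hc : HasCompactSupport u) (hV : ∀ j, Continuous (V j)) (hVc : ∀ j, HasCompactSupport (V j)) :
    -((p + 2) * ∫ x, ‖x‖ ^ p * (u x * ∑ j, x j * V j x))
      ≤ (p + 2) ^ 2 / 2 * energy (fun x ↦ ‖x‖ ^ p) u
        + 1 / 2 * ∑ j, energy (fun x ↦ ‖x‖ ^ (p + 2)) (V j) := by
  have hamgm := neg_integral_norm_rpow_mul_le (p := p) (a := p) (b := p) (r := (p + 2) / 2)
    (h := fun x ↦ ∑ j, x j * V j x) hp hp (by ring) (by positivity) hu hc
    (continuous_finsetSum _ fun j _ ↦ (contDiff_coord (m := 1) j).continuous.mul (hV j))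
    (hasCompactSupport_sum fun j ↦ (hVc j).mul_left)
  calc -((p + 2) * ∫ x, ‖x‖ ^ p * (u x * ∑ j, x j * V j x))
      = (p + 2) * -∫ x, ‖x‖ ^ p * (u x * ∑ j, x j * V j x) := by ring
    _ ≤ (p + 2) * ((p + 2) / 2 * energy (fun x ↦ ‖x‖ ^ p) u + (4 * ((p + 2) / 2))⁻¹
          * ∑ j, energy (fun x ↦ ‖x‖ ^ (p + 2)) (V j)) := by
        gcongr
        refine hamgm.trans ?_
        gcongr
        exact energy_sum_coord_mul_le hp hV hVc
    _ = _ := by field_simp; ring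

lemma two_mul_integral_mul_sum_mul_sub {V₁ V₂ : Fin n → 𝓔 n → ℝ} (hW : Continuous W)
    (h₁ : ∀ j, Continuous (V₁ j)) (hc₁ : ∀ j, HasCompactSupport (V₁ j))
    (h₂ : ∀ j, Continuous (V₂ j)) (hc₂ : ∀ j, HasCompactSupport (V₂ j)) :
    2 * ∫ x, W x * ∑ j, V₁ j x * (V₁ j x - V₂ j x)
      = ∑ j, energy W (V₁ j) + ∑ j, energy W (fun x ↦ V₁ j x - V₂ j x)
        - ∑ j, energy W (V₂ j) := by
  have i₁ (j : Fin n) := integrable_mul_sq hW (h₁ j) (hc₁ j)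
  have i₂ (j : Fin n) := integrable_mul_sq hW (h₂ j) (hc₂ j)
  have i₁₂ (j : Fin n) : Integrable fun x ↦ W x * (V₁ j x - V₂ j x) ^ 2 :=
    integrable_mul_sq hW ((h₁ j).sub (h₂ j)) ((hc₁ j).sub (hc₂ j))
  simp only [energy]
  rw [← integral_finsetSum _ fun j _ ↦ i₁ j, ← integral_finsetSum _ fun j _ ↦ i₂ j,
    ← integral_finsetSum _ fun j _ ↦ i₁₂ j, ← integral_add (integrable_finsetSum _ fun j _ ↦ i₁ j)
    (integrable_finsetSum _ fun j _ ↦ i₁₂ j), ← integral_sub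
    ((integrable_finsetSum _ fun j _ ↦ i₁ j).fun_add (integrable_finsetSum _ fun j _ ↦ i₁₂ j))
    (integrable_finsetSum _ fun j _ ↦ i₂ j), ← integral_const_mul]
  congr 1; ext x
  simp only [← Finset.mul_sum, ← mul_add, ← mul_sub, ← Finset.sum_add_distrib,
    ← Finset.sum_sub_distrib, mul_left_comm (2 : ℝ)]
  congr 1
  rw [Finset.mul_sum]
  exact Finset.sum_congr rfl fun j _ ↦ by ring

lemma neg_integral_norm_rpow_mul_sub_le (hp : 0 ≤ p) (k : ℝ) (hu : Continuous u)
    (hc : HasCompactSupport u) (hq : Continuous q) (hf : Continuous f)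
    (hfc : HasCompactSupport f) :
    -∫ x, ‖x‖ ^ (p + 2) * (u x * (f x - k ^ 2 * q x * u x))
      ≤ k ^ 2 * energy (fun x ↦ q x * ‖x‖ ^ (p + 2)) u
        + (1 / 2 * energy (fun x ↦ ‖x‖ ^ p) u + 1 / 2 * energy (fun x ↦ ‖x‖ ^ (p + 4)) f) := by
  have hp₂ : 0 ≤ p + 2 := by linarith
  have iQ : Integrable fun x ↦ q x * ‖x‖ ^ (p + 2) * u x ^ 2 :=
    integrable_mul_sq (hq.mul (continuous_norm_rpow hp₂)) hu hc
  have iuf : Integrable fun x ↦ ‖x‖ ^ (p + 2) * (u x * f x) :=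
    integrable_norm_rpow_mul hp₂ (hu.mul hf) hc.mul_right
  have hsplit : ∫ x, ‖x‖ ^ (p + 2) * (u x * (f x - k ^ 2 * q x * u x))
      = (∫ x, ‖x‖ ^ (p + 2) * (u x * f x))
        - k ^ 2 * energy (fun x ↦ q x * ‖x‖ ^ (p + 2)) u := by
    rw [energy, ← integral_const_mul, ← integral_sub iuf (iQ.const_mul _)]
    congr 1; ext x; ring
  have hamgm := neg_integral_norm_rpow_mul_le (p := p + 2) (a := p) (b := p + 4) (r := 1 / 2) hp
    (by linarith) (by ring) (by norm_num) hu hc hf hfc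
  norm_num at hamgm ⊢
  linarith

lemma energy_norm_gradient_le (hp : 0 ≤ p) (hu : ContDiff ℝ 2 u) (hc : HasCompactSupport u)
    (hq : Continuous q) (hF : ∀ j, ContDiff ℝ 1 (F j)) (hFc : ∀ j, HasCompactSupport (F j))
    (hf : Continuous f) (hfc : HasCompactSupport f)
    (heq : ∀ x, lap u x + k ^ 2 * q x * u x = f x + divergence F x) :
    energy (fun x ↦ ‖x‖ ^ (p + 2)) (fun x ↦ ‖gradient u x‖)
      ≤ 2 * k ^ 2 * energy (fun x ↦ q x * ‖x‖ ^ (p + 2)) u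
        + ((p + 2) ^ 2 + 1) * energy (fun x ↦ ‖x‖ ^ p) u
        + energy (fun x ↦ ‖x‖ ^ (p + 4)) f + ∑ j, energy (fun x ↦ ‖x‖ ^ (p + 2)) (F j) := by
  have hu₁ : ContDiff ℝ 1 u := hu.of_le (by norm_num)
  have hW : Continuous fun x : 𝓔 n ↦ ‖x‖ ^ (p + 2) := continuous_norm_rpow (by linarith)
  set V : Fin n → 𝓔 n → ℝ := fun j x ↦ pderiv' j u x - F j x
  have hV (j : Fin n) : ContDiff ℝ 1 (V j) := (contDiff_one_pderiv' j hu).sub (hF j)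
  have hVc (j : Fin n) : HasCompactSupport (V j) := (hasCompactSupport_pderiv' j hc).sub (hFc j)
  have hdiv (x : 𝓔 n) : divergence V x = f x - k ^ 2 * q x * u x := by
    rw [eq_sub_iff_add_eq, ← sub_eq_iff_eq_add.2 (heq x)]
    simp only [V, lap, divergence, pderiv'_sub _
      ((contDiff_one_pderiv' _ hu).differentiable (by norm_num) x)
      ((hF _).differentiable (by norm_num) x), Finset.sum_sub_distrib]
    ring
  have htest := integral_norm_rpow_mul_mul_divergence hp hu₁ hc hV
  simp only [hdiv] at htest
  have hpolar : 2 * ∫ x, ‖x‖ ^ (p + 2) * ∑ j, pderiv' j u x * V j x = _ :=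
    two_mul_integral_mul_sum_mul_sub hW (fun j ↦ continuous_pderiv' j hu₁)
      (fun j ↦ hasCompactSupport_pderiv' j hc) (fun j ↦ (hF j).continuous) hFc
  have hsource := neg_integral_norm_rpow_mul_sub_le hp k hu.continuous hc hq hf hfc
  have hradial := neg_integral_norm_rpow_mul_sum_coord_mul_le hp hu.continuous hc
    (fun j ↦ (hV j).continuous) hVc
  rw [energy_norm_gradient hW hu₁ hc]
  linarith

end Gradient

open scoped ContDiff

section RadialField

variable {n : ℕ} {a b : ℝ → ℝ}

/-- The divergence of the radial field `x ↦ a (‖x‖ ^ 2) x` on `ℝⁿ`, as a function of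
`s = ‖x‖ ^ 2`. -/
noncomputable def radialDiv (n : ℕ) (a : ℝ → ℝ) (s : ℝ) : ℝ := n * a s + 2 * s * deriv a s

lemma radialDiv_const_mul_sub (c : ℝ) (ha : Differentiable ℝ a) (hb : Differentiable ℝ b) (s : ℝ) :
    radialDiv n (fun t ↦ c * (a t - b t)) s = c * radialDiv n a s - c * radialDiv n b s := by
  simp only [radialDiv, deriv_const_mul_field, deriv_fun_sub (ha s) (hb s)]
  ring

lemma contDiff_radialDiv (n : ℕ) (ha : ContDiff ℝ ∞ a) : ContDiff ℝ ∞ (radialDiv n a) :=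
  (contDiff_const.mul ha).add
    ((contDiff_const.mul contDiff_id).mul (contDiff_infty_iff_deriv.1 ha).2)

lemma contDiff_comp_norm_sq {m : WithTop ℕ∞} (ha : ContDiff ℝ m a) :
    ContDiff ℝ m fun x : 𝓔 n ↦ a (‖x‖ ^ 2) :=
  ha.comp (contDiff_norm_sq ℝ)

lemma pderiv'_comp_norm_sq (j : Fin n) (ha : Differentiable ℝ a) (x : 𝓔 n) :
    pderiv' j (fun y ↦ a (‖y‖ ^ 2)) x = 2 * x j * deriv a (‖x‖ ^ 2) := by
  have h := (ha (‖x‖ ^ 2)).hasDerivAt.comp_hasFDerivAt x (hasStrictFDerivAt_norm_sq x).hasFDerivAt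
  rw [pderiv', show fderiv ℝ (fun y : 𝓔 n ↦ a (‖y‖ ^ 2)) x = _ from h.fderiv]
  simp [innerSL_apply_apply, EuclideanSpace.inner_single_right]
  ring

lemma pderiv'_coord_mul_comp_norm_sq (i j : Fin n) (ha : ContDiff ℝ 1 a) (x : 𝓔 n) :
    pderiv' i (fun y ↦ y j * a (‖y‖ ^ 2)) x
      = (if j = i then a (‖x‖ ^ 2) else 0) + 2 * (x i * x j) * deriv a (‖x‖ ^ 2) := by
  rw [pderiv'_mul i ((contDiff_coord (m := 1) j).differentiable (by norm_num) x)
    ((contDiff_comp_norm_sq ha).differentiable (by norm_num) x),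
    pderiv'_comp_norm_sq i (ha.differentiable (by norm_num)), pderiv'_coord, ite_mul, one_mul,
    zero_mul]
  ring

lemma divergence_coord_mul_comp_norm_sq (ha : ContDiff ℝ 1 a) (x : 𝓔 n) :
    divergence (fun (j : Fin n) y ↦ y j * a (‖y‖ ^ 2)) x = radialDiv n a (‖x‖ ^ 2) := by
  simp only [divergence, pderiv'_coord_mul_comp_norm_sq _ _ ha, if_true, Finset.sum_add_distrib,
    ← sq, ← Finset.sum_mul, ← Finset.mul_sum]
  simp [radialDiv, EuclideanSpace.norm_sq_eq]

-- A radial field is curl free, so its Laplacian is the gradient of its divergence.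
lemma lap_coord_mul_comp_norm_sq (j : Fin n) (ha : ContDiff ℝ 2 a) (x : 𝓔 n) :
    lap (fun y ↦ y j * a (‖y‖ ^ 2)) x = pderiv' j (fun y ↦ radialDiv n a (‖y‖ ^ 2)) x := by
  have ha₁ : ContDiff ℝ 1 a := ha.of_le (by norm_num)
  have hfield (i : Fin n) : ContDiff ℝ 2 fun y : 𝓔 n ↦ y i * a (‖y‖ ^ 2) :=
    (contDiff_coord i).mul (contDiff_comp_norm_sq ha)
  have hcurl (i : Fin n) : pderiv' i (fun y : 𝓔 n ↦ y j * a (‖y‖ ^ 2))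
      = pderiv' j fun y ↦ y i * a (‖y‖ ^ 2) := by
    ext y
    simp only [pderiv'_coord_mul_comp_norm_sq _ _ ha₁, eq_comm (a := i), mul_comm (y i)]
  simp only [← divergence_coord_mul_comp_norm_sq ha₁, divergence, lap, hcurl]
  rw [pderiv'_sum j fun i _ ↦ (contDiff_one_pderiv' i (hfield i)).differentiable (by norm_num) x]
  exact Finset.sum_congr rfl fun i _ ↦ pderiv'_comm i j (hfield i) x

lemma integral_pderiv'_eq_zero {g : 𝓔 n → ℝ} (j : Fin n) (hg : ContDiff ℝ 1 g)
    (hc : HasCompactSupport g) : ∫ x, pderiv' j g x = 0 := by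
  have hint : Integrable (pderiv' j g) := (continuous_pderiv' j hg).integrable_of_hasCompactSupport
    (hasCompactSupport_pderiv' j hc)
  simpa [pderiv'] using integral_mul_fderiv_eq_neg_fderiv_mul_of_integrable (f := fun _ ↦ 1)
    (v := EuclideanSpace.single j 1) (by simp) (by simp only [one_mul]; exact hint)
    (by simp only [one_mul]; exact hg.continuous.integrable_of_hasCompactSupport hc)
    (fun x _ ↦ differentiableAt_const _) fun x _ ↦ hg.differentiable (by norm_num) x

lemma integral_radialDiv_norm_sq (ha : ContDiff ℝ 1 a)
    (hc : HasCompactSupport fun x : 𝓔 n ↦ a (‖x‖ ^ 2)) :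
    ∫ x : 𝓔 n, radialDiv n a (‖x‖ ^ 2) = 0 := by
  have hfield (j : Fin n) : ContDiff ℝ 1 fun x : 𝓔 n ↦ x j * a (‖x‖ ^ 2) :=
    (contDiff_coord j).mul (contDiff_comp_norm_sq ha)
  have hfieldc (j : Fin n) : HasCompactSupport fun x : 𝓔 n ↦ x j * a (‖x‖ ^ 2) := hc.mul_left
  simp only [← divergence_coord_mul_comp_norm_sq ha, divergence]
  rw [integral_finsetSum _ fun j _ ↦ (continuous_pderiv' j
    (hfield j)).integrable_of_hasCompactSupport (hasCompactSupport_pderiv' j (hfieldc j))]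
  exact Finset.sum_eq_zero fun j _ ↦ integral_pderiv'_eq_zero j (hfield j) (hfieldc j)

end RadialField

section TruncatedPow

variable {l s : ℝ}

/-- A smooth cutoff in `s = ‖x‖ ^ 2`, equal to `0` for `‖x‖ ^ 2 ≤ l ^ 2 / 2` and to `1` for
`l ≤ ‖x‖`. -/
noncomputable def smoothCutoff (l s : ℝ) : ℝ := smoothTransition (2 * s / l ^ 2 - 1)

lemma contDiff_smoothCutoff (l : ℝ) : ContDiff ℝ ∞ (smoothCutoff l) :=
  smoothTransition.contDiff.comp (by fun_prop : ContDiff ℝ ∞ fun s : ℝ ↦ 2 * s / l ^ 2 - 1)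

lemma smoothCutoff_eq_zero (hl : 0 < l) (hs : s ≤ l ^ 2 / 2) : smoothCutoff l s = 0 := by
  refine smoothTransition.zero_of_nonpos (sub_nonpos.2 ((div_le_one (by positivity)).2 ?_))
  linarith

lemma smoothCutoff_eq_one (hl : 0 < l) (hs : l ^ 2 ≤ s) : smoothCutoff l s = 1 := by
  refine smoothTransition.one_of_one_le (le_sub_iff_add_le.2 ((le_div_iff₀ (by positivity)).2 ?_))
  linarith

lemma monotone_smoothCutoff (l : ℝ) : Monotone (smoothCutoff l) := fun s t hst ↦
  smoothTransition.monotone (by gcongr)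

lemma smoothCutoff_le_smoothCutoff {l' : ℝ} (hl : 0 < l) (hll' : l ≤ l') (hs : 0 ≤ s) :
    smoothCutoff l' s ≤ smoothCutoff l s :=
  smoothTransition.monotone (by gcongr)

lemma smoothCutoff_eq (l s : ℝ) : smoothCutoff l s = smoothCutoff 1 (s / l ^ 2) := by
  simp [smoothCutoff, mul_div_assoc]

lemma deriv_smoothCutoff (l s : ℝ) :
    deriv (smoothCutoff l) s = deriv (smoothCutoff 1) (s / l ^ 2) / l ^ 2 := by
  rw [show smoothCutoff l = fun t ↦ smoothCutoff 1 ((l ^ 2)⁻¹ * t) from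
    funext fun t ↦ by rw [smoothCutoff_eq, div_eq_inv_mul], deriv_comp_mul_left]
  simp only [smul_eq_mul, div_eq_inv_mul]

lemma deriv_smoothCutoff_eq_zero (hl : 0 < l) (hs : l ^ 2 < s) : deriv (smoothCutoff l) s = 0 := by
  have h : smoothCutoff l =ᶠ[𝓝 s] fun _ ↦ 1 := by
    filter_upwards [lt_mem_nhds hs] with t ht using smoothCutoff_eq_one hl ht.le
  rw [h.deriv_eq, deriv_const]

/-- The power `s ^ r`, made smooth at the origin by a cutoff at the scale `s = l ^ 2`. -/
noncomputable def truncatedPow (l r s : ℝ) : ℝ := smoothCutoff l s * s ^ r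

lemma truncatedPow_eventuallyEq_zero (hl : 0 < l) (r : ℝ) (hs : s < l ^ 2 / 2) :
    truncatedPow l r =ᶠ[𝓝 s] fun _ ↦ 0 := by
  filter_upwards [gt_mem_nhds hs] with t ht
  rw [truncatedPow, smoothCutoff_eq_zero hl ht.le, zero_mul]

lemma contDiff_truncatedPow (hl : 0 < l) (r : ℝ) : ContDiff ℝ ∞ (truncatedPow l r) := by
  refine contDiff_iff_contDiffAt.2 fun s ↦ ?_
  rcases lt_or_ge s (l ^ 2 / 2) with hs | hs
  · exact contDiffAt_const.congr_of_eventuallyEq (truncatedPow_eventuallyEq_zero hl r hs)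
  · have : 0 < l ^ 2 / 2 := by positivity
    exact (contDiff_smoothCutoff l).contDiffAt.mul (contDiffAt_rpow_const_of_ne (by linarith))

lemma radialDiv_truncatedPow (n : ℕ) (hl : 0 < l) (r : ℝ) (hs : 0 ≤ s) :
    radialDiv n (truncatedPow l r) s
      = (n + 2 * r) * truncatedPow l r s + 2 * s ^ (r + 1) * deriv (smoothCutoff l) s := by
  have hl' : 0 < l ^ 2 / 2 := by positivity
  rcases lt_or_ge s (l ^ 2 / 2) with hs' | hs'
  · have hcut : smoothCutoff l =ᶠ[𝓝 s] fun _ ↦ 0 := by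
      filter_upwards [gt_mem_nhds hs'] with t ht using smoothCutoff_eq_zero hl ht.le
    have hpow := truncatedPow_eventuallyEq_zero hl r hs'
    simp [radialDiv, hcut.deriv_eq, hpow.deriv_eq, hpow.eq_of_nhds]
  · have hs₀ : s ≠ 0 := by linarith
    have hcut := ((contDiff_smoothCutoff l).differentiable (by simp) s).hasDerivAt
    have h : deriv (truncatedPow l r) s = _ :=
      (hcut.mul (hasDerivAt_rpow_const (p := r) (Or.inl hs₀))).deriv
    rw [radialDiv, h, rpow_sub_one hs₀, rpow_add_one hs₀, truncatedPow]
    field_simp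
    ring

lemma radialDiv_truncatedPow_add (n : ℕ) (hl : 0 < l) (r r' : ℝ) (hs : 0 ≤ s) :
    radialDiv n (truncatedPow l (r + r')) s
      = s ^ r' * (radialDiv n (truncatedPow l r) s + 2 * r' * truncatedPow l r s) := by
  rcases hs.eq_or_lt with rfl | hs
  · have h (p : ℝ) : truncatedPow l p 0 = 0 := by
      rw [truncatedPow, smoothCutoff_eq_zero hl (by positivity), zero_mul]
    simp [radialDiv, h]
  · rw [radialDiv_truncatedPow n hl _ hs.le, radialDiv_truncatedPow n hl _ hs.le, truncatedPow,
      truncatedPow, show r + r' + 1 = r' + (r + 1) by ring, rpow_add hs r' (r + 1),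
      rpow_add hs r r']
    ring

end TruncatedPow

section Mollifier

variable {n : ℕ} {l : ℝ}

lemma radialDiv_truncatedPow_neg_half (n : ℕ) {s : ℝ} (hl : 0 < l) (hs : 0 ≤ s) :
    radialDiv n (truncatedPow l (-(n / 2))) s
      = 2 * s ^ (1 - n / 2 : ℝ) * deriv (smoothCutoff l) s := by
  rw [radialDiv_truncatedPow n hl _ hs, neg_add_eq_sub]
  ring

lemma radialDiv_truncatedPow_scale (n : ℕ) {s : ℝ} (hl : 0 < l) (hs : 0 ≤ s) :
    radialDiv n (truncatedPow l (-(n / 2))) s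
      = (l ^ n)⁻¹ * radialDiv n (truncatedPow 1 (-(n / 2))) (s / l ^ 2) := by
  have hl_pow : (l ^ 2) ^ (1 - n / 2 : ℝ) = l ^ 2 / l ^ n := by
    rw [← rpow_natCast, ← rpow_natCast, ← rpow_mul hl.le, ← rpow_sub hl]
    congr 1
    push_cast
    ring
  rw [radialDiv_truncatedPow_neg_half n hl hs,
    radialDiv_truncatedPow_neg_half n one_pos (by positivity), div_rpow hs (by positivity), hl_pow,
    deriv_smoothCutoff l s]
  field_simp

/-- The normalisation making the integral of `mollifier` equal to `1`. -/
noncomputable def mollifierConst (n : ℕ) : ℝ :=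
  (∫ x : 𝓔 n, radialDiv n (truncatedPow 1 (-(n / 2))) (‖x‖ ^ 2))⁻¹

/-- The approximate identity at scale `l`: up to normalisation, the divergence of the field
`‖x‖⁻ⁿ x` (a multiple of the gradient of the fundamental solution of the Laplacian) truncated near
the origin at scale `l`. -/
noncomputable def mollifier (l : ℝ) (x : 𝓔 n) : ℝ :=
  mollifierConst n * radialDiv n (truncatedPow l (-(n / 2))) (‖x‖ ^ 2)

lemma radialDiv_truncatedPow_nonneg (hl : 0 < l) (x : 𝓔 n) :
    0 ≤ radialDiv n (truncatedPow l (-(n / 2))) (‖x‖ ^ 2) := by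
  rw [radialDiv_truncatedPow_neg_half n hl (by positivity)]
  have := (monotone_smoothCutoff l).deriv_nonneg (x := ‖x‖ ^ 2)
  positivity

lemma mollifierConst_nonneg (n : ℕ) : 0 ≤ mollifierConst n :=
  inv_nonneg.2 (integral_nonneg fun x ↦ radialDiv_truncatedPow_nonneg one_pos x)

lemma mollifier_nonneg (hl : 0 < l) (x : 𝓔 n) : 0 ≤ mollifier l x :=
  mul_nonneg (mollifierConst_nonneg n) (radialDiv_truncatedPow_nonneg hl x)

lemma contDiff_mollifier (hl : 0 < l) : ContDiff ℝ ∞ (mollifier l : 𝓔 n → ℝ) :=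
  contDiff_const.mul
    (contDiff_comp_norm_sq (contDiff_radialDiv n (contDiff_truncatedPow hl _)))

lemma radialDiv_truncatedPow_eq_zero (hl : 0 < l) {x : 𝓔 n} (hx : l < ‖x‖) :
    radialDiv n (truncatedPow l (-(n / 2))) (‖x‖ ^ 2) = 0 := by
  rw [radialDiv_truncatedPow_neg_half n hl (by positivity),
    deriv_smoothCutoff_eq_zero hl (by gcongr), mul_zero]

lemma hasCompactSupport_of_norm_le {g : 𝓔 n → ℝ} {R : ℝ} (hg : ∀ x, R < ‖x‖ → g x = 0) :
    HasCompactSupport g :=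
  HasCompactSupport.intro (isCompact_closedBall 0 R) fun x hx ↦ hg x (by simpa using hx)

lemma mollifier_eq_zero (hl : 0 < l) {x : 𝓔 n} (hx : l < ‖x‖) : mollifier l x = 0 := by
  rw [mollifier, radialDiv_truncatedPow_eq_zero hl hx, mul_zero]

lemma hasCompactSupport_mollifier (hl : 0 < l) : HasCompactSupport (mollifier l : 𝓔 n → ℝ) :=
  hasCompactSupport_of_norm_le fun _ hx ↦ mollifier_eq_zero hl hx

lemma mollifier_eq (hl : 0 < l) (x : 𝓔 n) :
    mollifier l x = (l ^ n)⁻¹ * mollifier 1 (l⁻¹ • x) := by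
  rw [mollifier, mollifier, radialDiv_truncatedPow_scale n hl (by positivity), norm_smul, mul_pow,
    norm_inv, norm_of_nonneg hl.le]
  ring_nf

lemma exists_deriv_smoothCutoff_pos : ∃ s, 0 < s ∧ 0 < deriv (smoothCutoff 1) s := by
  obtain ⟨s, hs, hderiv⟩ := exists_deriv_eq_slope (smoothCutoff 1)
    (show (1 / 2 : ℝ) < 1 by norm_num)
    (contDiff_smoothCutoff 1).continuous.continuousOn
    ((contDiff_smoothCutoff 1).differentiable (by simp)).differentiableOn
  refine ⟨s, by linarith [hs.1], ?_⟩
  rw [hderiv, smoothCutoff_eq_one one_pos (by norm_num), smoothCutoff_eq_zero one_pos (by norm_num)]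
  norm_num

lemma integral_radialDiv_truncatedPow_pos (hn : n ≠ 0) :
    0 < ∫ x : 𝓔 n, radialDiv n (truncatedPow 1 (-(n / 2))) (‖x‖ ^ 2) := by
  obtain ⟨s, hs, hderiv⟩ := exists_deriv_smoothCutoff_pos
  let x₀ : 𝓔 n := EuclideanSpace.single ⟨0, Nat.pos_of_ne_zero hn⟩ √s
  have hx₀ : ‖x₀‖ ^ 2 = s := by simp [x₀, sq_sqrt hs.le]
  refine (contDiff_comp_norm_sq (contDiff_radialDiv n
    (contDiff_truncatedPow one_pos _))).continuous.integral_pos_of_hasCompactSupport_nonneg_nonzero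
    (hasCompactSupport_of_norm_le fun _ hx ↦ radialDiv_truncatedPow_eq_zero one_pos hx)
    (fun x ↦ radialDiv_truncatedPow_nonneg one_pos x) (x := x₀) ?_
  rw [hx₀, radialDiv_truncatedPow_neg_half n one_pos hs.le]
  positivity

lemma integral_mollifier (hn : n ≠ 0) (hl : 0 < l) : ∫ x : 𝓔 n, mollifier l x = 1 := by
  have hone : ∫ x : 𝓔 n, mollifier 1 x = 1 := by
    simp only [mollifier, mollifierConst]
    rw [integral_const_mul, inv_mul_cancel₀ (integral_radialDiv_truncatedPow_pos hn).ne']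
  simp only [mollifier_eq hl]
  rw [integral_const_mul, Measure.integral_comp_inv_smul_of_nonneg _ _ hl.le, hone]
  simp [hl.ne']

lemma integral_abs_pderiv'_mollifier (j : Fin n) (hl : 0 < l) :
    ∫ x, |pderiv' j (mollifier l) x| = l⁻¹ * ∫ x, |pderiv' j (mollifier 1) x| := by
  have hpderiv (x : 𝓔 n) : pderiv' j (mollifier l) x
      = (l ^ n)⁻¹ * l⁻¹ * pderiv' j (mollifier 1) (l⁻¹ • x) := by
    rw [funext (mollifier_eq hl), pderiv'_const_mul j, pderiv', pderiv',
      show fderiv ℝ (fun y : 𝓔 n ↦ mollifier 1 (l⁻¹ • y)) x = _ from fderiv_comp_smul _]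
    · simp [mul_assoc]
    · exact (((contDiff_mollifier one_pos).comp (contDiff_const_smul _)).differentiable (by simp) x)
  simp only [hpderiv, abs_mul, abs_of_pos (inv_pos.2 (pow_pos hl n)), abs_of_pos (inv_pos.2 hl)]
  rw [integral_const_mul,
    Measure.integral_comp_inv_smul_of_nonneg _ (fun x ↦ |pderiv' j (mollifier 1) x|) hl.le]
  simp only [finrank_euclideanSpace, Fintype.card_fin, smul_eq_mul]
  field_simp

end Mollifier

section Parametrix

variable {n : ℕ} {ε T s : ℝ}

/-- The profile `s ↦ c (s ^ (-n/2) - s ^ (-n/2))`, the two powers being truncated at the scales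
`ε` and `T`, so that it vanishes for `T ^ 2 ≤ s`. -/
noncomputable def parametrixProfile (n : ℕ) (ε T s : ℝ) : ℝ :=
  mollifierConst n * (truncatedPow ε (-(n / 2)) s - truncatedPow T (-(n / 2)) s)

/-- The `j`-th component of a compactly supported parametrix for `Δ⁻¹ ∇`: its Laplacian is
`∂ⱼ` of an approximate identity at scale `ε`, up to the same at scale `T`. -/
noncomputable def parametrix (ε T : ℝ) (j : Fin n) (x : 𝓔 n) : ℝ :=
  x j * parametrixProfile n ε T (‖x‖ ^ 2)

lemma contDiff_parametrixProfile (n : ℕ) (hε : 0 < ε) (hT : 0 < T) :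
    ContDiff ℝ ∞ (parametrixProfile n ε T) :=
  contDiff_const.mul ((contDiff_truncatedPow hε _).sub (contDiff_truncatedPow hT _))

lemma contDiff_parametrix (hε : 0 < ε) (hT : 0 < T) (j : Fin n) :
    ContDiff ℝ ∞ (parametrix ε T j) :=
  (contDiff_coord j).mul (contDiff_comp_norm_sq (contDiff_parametrixProfile n hε hT))

lemma truncatedPow_sub_eq_zero (hε : 0 < ε) (hεT : ε ≤ T) (r : ℝ) (hs : T ^ 2 ≤ s) :
    truncatedPow ε r s - truncatedPow T r s = 0 := by
  have hεs : ε ^ 2 ≤ s := le_trans (by gcongr) hs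
  rw [truncatedPow, truncatedPow, smoothCutoff_eq_one hε hεs,
    smoothCutoff_eq_one (hε.trans_le hεT) hs, sub_self]

lemma parametrixProfile_nonneg (n : ℕ) (hε : 0 < ε) (hεT : ε ≤ T) (hs : 0 ≤ s) :
    0 ≤ parametrixProfile n ε T s := by
  refine mul_nonneg (mollifierConst_nonneg n) (sub_nonneg.2 ?_)
  exact mul_le_mul_of_nonneg_right (smoothCutoff_le_smoothCutoff hε hεT hs) (by positivity)

lemma parametrixProfile_eq_zero (n : ℕ) (hε : 0 < ε) (hεT : ε ≤ T) (hs : T ^ 2 ≤ s) :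
    parametrixProfile n ε T s = 0 := by
  rw [parametrixProfile, truncatedPow_sub_eq_zero hε hεT _ hs, mul_zero]

lemma parametrix_eq_zero (hε : 0 < ε) (hεT : ε ≤ T) (j : Fin n) {x : 𝓔 n} (hx : T ≤ ‖x‖) :
    parametrix ε T j x = 0 := by
  have hT : 0 < T := hε.trans_le hεT
  rw [parametrix, parametrixProfile_eq_zero n hε hεT (by gcongr), mul_zero]

lemma hasCompactSupport_parametrix (hε : 0 < ε) (hεT : ε ≤ T) (j : Fin n) :
    HasCompactSupport (parametrix ε T j) :=
  hasCompactSupport_of_norm_le fun _ hx ↦ parametrix_eq_zero hε hεT j hx.le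

lemma lap_parametrix (hε : 0 < ε) (hT : 0 < T) (j : Fin n) (x : 𝓔 n) :
    lap (parametrix ε T j) x = pderiv' j (mollifier ε) x - pderiv' j (mollifier T) x := by
  have hdiff {l : ℝ} (hl : 0 < l) : Differentiable ℝ (truncatedPow l (-(n / 2))) :=
    (contDiff_truncatedPow hl _).differentiable (by simp)
  rw [← pderiv'_sub j ((contDiff_mollifier hε).differentiable (by simp) x)
    ((contDiff_mollifier hT).differentiable (by simp) x)]
  simp only [mollifier, ← radialDiv_const_mul_sub _ (hdiff hε) (hdiff hT)]
  exact lap_coord_mul_comp_norm_sq j (contDiff_infty.1 (contDiff_parametrixProfile n hε hT) 2) x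

lemma integrable_norm_mul_parametrixProfile (hε : 0 < ε) (hεT : ε ≤ T) :
    Integrable fun x : 𝓔 n ↦ ‖x‖ * parametrixProfile n ε T (‖x‖ ^ 2) := by
  have hT : 0 < T := hε.trans_le hεT
  refine (continuous_norm.mul (contDiff_comp_norm_sq
    (contDiff_parametrixProfile n hε hT)).continuous).integrable_of_hasCompactSupport
    (hasCompactSupport_of_norm_le (R := T) fun x (hx : T < ‖x‖) ↦ ?_)
  rw [Pi.mul_apply, parametrixProfile_eq_zero n hε hεT (by gcongr), mul_zero]

-- Integrating the divergence of `‖x‖ · parametrix` avoids polar coordinates.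
lemma integral_norm_mul_parametrixProfile (hε : 0 < ε) (hεT : ε ≤ T) :
    ∫ x : 𝓔 n, ‖x‖ * parametrixProfile n ε T (‖x‖ ^ 2)
      = (∫ x : 𝓔 n, ‖x‖ * mollifier T x) - ∫ x : 𝓔 n, ‖x‖ * mollifier ε x := by
  have hT : 0 < T := hε.trans_le hεT
  let b : ℝ → ℝ := fun s ↦ mollifierConst n
    * (truncatedPow ε (-(n / 2) + 1 / 2) s - truncatedPow T (-(n / 2) + 1 / 2) s)
  have hb : ContDiff ℝ ∞ b :=
    contDiff_const.mul ((contDiff_truncatedPow hε _).sub (contDiff_truncatedPow hT _))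
  have hbc : HasCompactSupport fun x : 𝓔 n ↦ b (‖x‖ ^ 2) :=
    hasCompactSupport_of_norm_le (R := T) fun x (hx : T < ‖x‖) ↦ by
      simp only [b, truncatedPow_sub_eq_zero hε hεT _ (by gcongr : T ^ 2 ≤ ‖x‖ ^ 2), mul_zero]
  have hdiv (x : 𝓔 n) : radialDiv n b (‖x‖ ^ 2)
      = ‖x‖ * mollifier ε x - ‖x‖ * mollifier T x
        + ‖x‖ * parametrixProfile n ε T (‖x‖ ^ 2) := by
    have hdiff {l : ℝ} (hl : 0 < l) (r : ℝ) : Differentiable ℝ (truncatedPow l r) :=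
      (contDiff_truncatedPow hl r).differentiable (by simp)
    rw [radialDiv_const_mul_sub _ (hdiff hε _) (hdiff hT _),
      radialDiv_truncatedPow_add n hε _ _ (by positivity),
      radialDiv_truncatedPow_add n hT _ _ (by positivity), ← sqrt_eq_rpow, sqrt_sq (norm_nonneg x),
      mollifier, mollifier, parametrixProfile]
    ring
  have imoll {l : ℝ} (hl : 0 < l) : Integrable fun x : 𝓔 n ↦ ‖x‖ * mollifier l x :=
    (continuous_norm.mul (contDiff_mollifier hl).continuous).integrable_of_hasCompactSupport
      (hasCompactSupport_mollifier hl).mul_left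
  have hzero := integral_radialDiv_norm_sq (hb.of_le (by simp)) hbc
  simp only [hdiv] at hzero
  rw [integral_add (by exact (imoll hε).sub (imoll hT))
    (integrable_norm_mul_parametrixProfile hε hεT), integral_sub (imoll hε) (imoll hT)] at hzero
  linarith

lemma integral_abs_parametrix_le (hn : n ≠ 0) (hε : 0 < ε) (hεT : ε ≤ T) (j : Fin n) :
    ∫ x, |parametrix ε T j x| ≤ T := by
  have hT : 0 < T := hε.trans_le hεT
  calc ∫ x, |parametrix ε T j x|
      ≤ ∫ x : 𝓔 n, ‖x‖ * parametrixProfile n ε T (‖x‖ ^ 2) := by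
        refine integral_mono_of_nonneg (.of_forall fun x ↦ abs_nonneg _)
          (integrable_norm_mul_parametrixProfile hε hεT) (.of_forall fun x ↦ ?_)
        have hprof := parametrixProfile_nonneg n hε hεT (sq_nonneg ‖x‖)
        simp only [parametrix, abs_mul, abs_of_nonneg hprof]
        gcongr
        exact PiLp.norm_apply_le x j
    _ ≤ ∫ x : 𝓔 n, ‖x‖ * mollifier T x := by
        rw [integral_norm_mul_parametrixProfile hε hεT]
        exact sub_le_self _ (integral_nonneg fun x ↦
          mul_nonneg (norm_nonneg x) (mollifier_nonneg hε x))
    _ ≤ ∫ x : 𝓔 n, T * mollifier T x := by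
        refine integral_mono_of_nonneg (.of_forall fun x ↦
          mul_nonneg (norm_nonneg x) (mollifier_nonneg hT x))
          (((contDiff_mollifier hT).continuous.integrable_of_hasCompactSupport
            (hasCompactSupport_mollifier hT)).const_mul T) (.of_forall fun x ↦ ?_)
        rcases le_or_gt ‖x‖ T with hx | hx
        · exact mul_le_mul_of_nonneg_right hx (mollifier_nonneg hT x)
        · simp [mollifier_eq_zero hT hx]
    _ = T := by rw [integral_const_mul, integral_mollifier hn hT, mul_one]

end Parametrix

section Convolution

open scoped Convolution

variable {n : ℕ} {h k W W' : 𝓔 n → ℝ} {T R c : ℝ}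

lemma convolution_lsmul_comm (k h : 𝓔 n → ℝ) : k ⋆ h = h ⋆ k := by
  ext x
  rw [convolution_lsmul_swap, convolution_lsmul]
  simp only [smul_eq_mul, mul_comm]

lemma contDiff_convolution {m : ℕ∞} (hk : ContDiff ℝ m k) (hkc : HasCompactSupport k)
    (hh : Continuous h) : ContDiff ℝ m (k ⋆ h) :=
  hkc.contDiff_convolution_left _ hk hh.locallyIntegrable

lemma continuous_convolution (hk : Continuous k) (hkc : HasCompactSupport k) (hh : Continuous h) :
    Continuous (k ⋆ h) :=
  hkc.continuous_convolution_left _ hk hh.locallyIntegrable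

lemma pderiv'_convolution (j : Fin n) (hk : ContDiff ℝ 1 k) (hkc : HasCompactSupport k)
    (hh : Continuous h) (x : 𝓔 n) : pderiv' j (k ⋆ h) x = (pderiv' j k ⋆ h) x := by
  have hint := (hkc.fderiv ℝ).convolutionExists_left (μ := volume)
    ((ContinuousLinearMap.lsmul ℝ ℝ).precompL (𝓔 n)) (hk.continuous_fderiv (by norm_num))
    hh.locallyIntegrable x
  rw [pderiv', (hkc.hasFDerivAt_convolution_left _ hk hh.locallyIntegrable x).fderiv,
    convolution_def, ContinuousLinearMap.integral_apply hint, convolution_lsmul]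
  simp [pderiv']

lemma pderiv'_convolution_eq_convolution_pderiv' (j : Fin n) (hk : ContDiff ℝ 1 k)
    (hkc : HasCompactSupport k) (hh : ContDiff ℝ 1 h) (hhc : HasCompactSupport h) :
    pderiv' j k ⋆ h = k ⋆ pderiv' j h := by
  ext x
  rw [← pderiv'_convolution j hk hkc hh.continuous, convolution_lsmul_comm k,
    pderiv'_convolution j hh hhc hk.continuous, convolution_lsmul_comm]

lemma integrable_mul_comp_sub (hk : Continuous k) (hkc : HasCompactSupport k) (hh : Continuous h)
    (x : 𝓔 n) : Integrable fun t ↦ k t * h (x - t) :=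
  (hk.mul (hh.comp (continuous_const.sub continuous_id))).integrable_of_hasCompactSupport
    hkc.mul_right

lemma lap_convolution (hk : ContDiff ℝ 2 k) (hkc : HasCompactSupport k) (hh : Continuous h)
    (x : 𝓔 n) : lap (k ⋆ h) x = (lap k ⋆ h) x := by
  have hterm (j : Fin n) : pderiv' j (pderiv' j (k ⋆ h)) x
      = (pderiv' j (pderiv' j k) ⋆ h) x := by
    rw [funext (pderiv'_convolution j (hk.of_le (by norm_num)) hkc hh),
      pderiv'_convolution j (contDiff_one_pderiv' j hk) (hasCompactSupport_pderiv' j hkc) hh]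
  simp only [lap, hterm, convolution_lsmul, smul_eq_mul, Finset.sum_mul]
  exact (integral_finsetSum _ fun j _ ↦ integrable_mul_comp_sub
    (continuous_pderiv' j (contDiff_one_pderiv' j hk))
    (hasCompactSupport_pderiv' j (hasCompactSupport_pderiv' j hkc)) hh x).symm

lemma convolution_eq_zero (hk : ∀ x, T < ‖x‖ → k x = 0) (hh : ∀ x, R < ‖x‖ → h x = 0)
    {x : 𝓔 n} (hx : T + R < ‖x‖) : (k ⋆ h) x = 0 := by
  rw [convolution_lsmul]
  refine integral_eq_zero_of_ae (.of_forall fun t ↦ ?_)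
  rcases lt_or_ge T ‖t‖ with ht | ht
  · simp [hk t ht]
  · have hxt : R < ‖x - t‖ := by linarith [norm_sub_norm_le x t]
    simp [hh _ hxt]

lemma sq_integral_mul_le {X : Type*} [MeasurableSpace X] {μ : Measure X} {k g : X → ℝ}
    (hk : Integrable (fun x ↦ |k x|) μ) (hkg : Integrable (fun x ↦ k x * g x) μ)
    (hkg' : Integrable (fun x ↦ |k x| * g x ^ 2) μ) :
    (∫ x, k x * g x ∂μ) ^ 2 ≤ (∫ x, |k x| ∂μ) * ∫ x, |k x| * g x ^ 2 ∂μ := by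
  have hdiscrim : discrim (∫ x, |k x| ∂μ) (2 * ∫ x, k x * g x ∂μ)
      (∫ x, |k x| * g x ^ 2 ∂μ) ≤ 0 := by
    refine discrim_le_zero fun l ↦ ?_
    calc 0 ≤ ∫ x, l * l * |k x| + 2 * l * (k x * g x) + |k x| * g x ^ 2 ∂μ := by
          refine integral_nonneg fun x ↦ ?_
          rw [Pi.zero_apply]
          rcases abs_choice (k x) with hkx | hkx
          · linear_combination 2 * l * g x * hkx
              + mul_nonneg (abs_nonneg (k x)) (sq_nonneg (l + g x))
          · linear_combination -2 * l * g x * hkx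
              + mul_nonneg (abs_nonneg (k x)) (sq_nonneg (l - g x))
      _ = _ := by
          rw [integral_add (by exact (hk.const_mul _).add (hkg.const_mul _)) hkg',
            integral_add (hk.const_mul _) (hkg.const_mul _), integral_const_mul,
            integral_const_mul]
          ring
  rw [discrim] at hdiscrim
  linarith

lemma mul_sq_convolution_le (hk : Continuous k) (hkc : HasCompactSupport k) (hh : Continuous h)
    (hW' : Continuous W') {x : 𝓔 n} (hW₀ : 0 ≤ W x)
    (hle : ∀ t, k t ≠ 0 → h (x - t) ≠ 0 → W x ≤ c * W' (x - t)) :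
    W x * (k ⋆ h) x ^ 2
      ≤ c * (∫ t, |k t|) * ((fun t ↦ |k t|) ⋆ fun y ↦ W' y * h y ^ 2) x := by
  have ikh₂ : Integrable fun t ↦ |k t| * h (x - t) ^ 2 :=
    integrable_mul_comp_sub hk.abs hkc.norm (hh.pow 2) x
  have ikWh₂ : Integrable fun t ↦ |k t| * (W' (x - t) * h (x - t) ^ 2) :=
    integrable_mul_comp_sub hk.abs hkc.norm (hW'.mul (hh.pow 2)) x
  simp only [convolution_lsmul, smul_eq_mul]
  calc W x * (∫ t, k t * h (x - t)) ^ 2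
      ≤ W x * ((∫ t, |k t|) * ∫ t, |k t| * h (x - t) ^ 2) := by
        refine mul_le_mul_of_nonneg_left (sq_integral_mul_le ?_ ?_ ikh₂) hW₀
        · exact hk.abs.integrable_of_hasCompactSupport hkc.norm
        · exact integrable_mul_comp_sub hk hkc hh x
    _ = (∫ t, |k t|) * ∫ t, W x * (|k t| * h (x - t) ^ 2) := by rw [integral_const_mul]; ring
    _ ≤ (∫ t, |k t|) * ∫ t, c * (|k t| * (W' (x - t) * h (x - t) ^ 2)) := by
        refine mul_le_mul_of_nonneg_left (integral_mono (ikh₂.const_mul _) (ikWh₂.const_mul _)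
          fun t ↦ ?_) (integral_nonneg fun t ↦ abs_nonneg _)
        by_cases hzero : k t = 0 ∨ h (x - t) = 0
        · rcases hzero with hzero | hzero <;> simp [hzero]
        · rw [not_or] at hzero
          linear_combination (|k t| * h (x - t) ^ 2) * hle t hzero.1 hzero.2
    _ = c * (∫ t, |k t|) * ∫ t, |k t| * (W' (x - t) * h (x - t) ^ 2) := by
        rw [integral_const_mul]; ring

lemma energy_convolution_le (hk : Continuous k) (hkc : HasCompactSupport k) (hh : Continuous h)
    (hhc : HasCompactSupport h) (hW₀ : ∀ x, 0 ≤ W x) (hW' : Continuous W')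
    (hle : ∀ x t, k t ≠ 0 → h (x - t) ≠ 0 → W x ≤ c * W' (x - t)) :
    energy W (k ⋆ h) ≤ c * (∫ t, |k t|) ^ 2 * energy W' h := by
  have ik : Integrable fun t ↦ |k t| := hk.abs.integrable_of_hasCompactSupport hkc.norm
  have ih : Integrable fun x ↦ W' x * h x ^ 2 := integrable_mul_sq hW' hh hhc
  calc energy W (k ⋆ h)
      ≤ ∫ x, c * (∫ t, |k t|) * ((fun t ↦ |k t|) ⋆ fun y ↦ W' y * h y ^ 2) x :=
        integral_mono_of_nonneg (.of_forall fun x ↦ mul_nonneg (hW₀ x) (sq_nonneg _))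
          ((ik.integrable_convolution _ ih).const_mul _)
          (.of_forall fun x ↦ mul_sq_convolution_le hk hkc hh hW' (hW₀ x) (hle x))
    _ = c * (∫ t, |k t|) ^ 2 * energy W' h := by
        rw [integral_const_mul, integral_convolution _ ik ih]
        simp only [ContinuousLinearMap.lsmul_apply, smul_eq_mul, energy]
        ring

end Convolution

section Approximation

open scoped Convolution

variable {n : ℕ} {g W : 𝓔 n → ℝ} {ε : ℝ}

lemma support_mollifier_subset (hε : 0 < ε) :
    Function.support (mollifier ε : 𝓔 n → ℝ) ⊆ Metric.closedBall 0 ε := fun x hx ↦ by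
  rw [mem_closedBall_zero_iff]
  exact not_lt.1 fun hlt ↦ hx (mollifier_eq_zero hε hlt)

lemma tendsto_support_mollifier :
    Tendsto (fun ε ↦ Function.support (mollifier ε : 𝓔 n → ℝ)) (𝓝[>] 0) (𝓝 0).smallSets := by
  refine (Metric.nhds_basis_closedBall.smallSets.tendsto_right_iff).2 fun δ hδ ↦ ?_
  filter_upwards [Ioo_mem_nhdsGT hδ] with ε hε
  exact (support_mollifier_subset hε.1).trans (Metric.closedBall_subset_closedBall hε.2.le)

lemma tendsto_mollifier_convolution (hn : n ≠ 0) (hg : Continuous g) (x : 𝓔 n) :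
    Tendsto (fun ε ↦ (mollifier ε ⋆ g) x) (𝓝[>] 0) (𝓝 (g x)) :=
  convolution_tendsto_right
    (eventually_mem_nhdsWithin.mono fun _ hε ↦ mollifier_nonneg hε)
    (eventually_mem_nhdsWithin.mono fun _ hε ↦ integral_mollifier hn hε)
    tendsto_support_mollifier (.of_forall fun _ ↦ hg.aestronglyMeasurable)
    ((hg.tendsto x).comp tendsto_snd) tendsto_const_nhds

lemma abs_mollifier_convolution_le {M : ℝ} (hn : n ≠ 0) (hε : 0 < ε) (hg : Continuous g)
    (hM : ∀ x, |g x| ≤ M) (x : 𝓔 n) : |(mollifier ε ⋆ g) x| ≤ M := by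
  have hsupp : Function.support (mollifier ε : 𝓔 n → ℝ) ⊆ Metric.ball 0 (2 * ε) :=
    (support_mollifier_subset hε).trans (Metric.closedBall_subset_ball (by linarith))
  simpa using dist_convolution_le (x₀ := x) (z₀ := 0) ((abs_nonneg _).trans (hM x)) hsupp
    (mollifier_nonneg hε) (integral_mollifier hn hε) hg.aestronglyMeasurable
    fun y _ ↦ by simpa using hM y

lemma tendsto_energy_sub_mollifier_convolution (hn : n ≠ 0) (hW : Continuous W)
    (hg : Continuous g) (hgc : HasCompactSupport g) :
    Tendsto (fun ε ↦ energy W fun x ↦ g x - (mollifier ε ⋆ g) x) (𝓝[>] 0) (𝓝 0) := by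
  obtain ⟨M, hM⟩ := hgc.exists_bound_of_continuous hg
  obtain ⟨R, -, hR⟩ := hgc.exists_pos_le_norm
  have hlim (x : 𝓔 n) :
      Tendsto (fun ε ↦ W x * (g x - (mollifier ε ⋆ g) x) ^ 2) (𝓝[>] 0) (𝓝 0) := by
    simpa using ((tendsto_mollifier_convolution hn hg x).const_sub (g x)).pow 2 |>.const_mul (W x)
  have hbound : ∀ ε ∈ Set.Ioo (0 : ℝ) 1, ∀ x : 𝓔 n, ‖W x * (g x - (mollifier ε ⋆ g) x) ^ 2‖
      ≤ (Metric.closedBall 0 (1 + R)).indicator (fun x ↦ |W x| * (M + M) ^ 2) x := by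
    intro ε hε x
    by_cases hx : x ∈ Metric.closedBall 0 (1 + R)
    · rw [Set.indicator_of_mem hx, norm_mul, norm_pow]
      gcongr
      · exact le_rfl
      · exact (abs_sub _ _).trans
          (add_le_add (hM x) (abs_mollifier_convolution_le hn hε.1 hg hM x))
    · rw [mem_closedBall_zero_iff, not_le] at hx
      have hconv : (mollifier ε ⋆ g) x = 0 :=
        convolution_eq_zero (fun _ ↦ mollifier_eq_zero hε.1) (fun _ hy ↦ hR _ hy.le)
          (by linarith [hε.2])
      simp [hconv, hR x (by linarith), Set.indicator_of_notMem, hx]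
  have hint : Integrable ((Metric.closedBall 0 (1 + R)).indicator
      fun x : 𝓔 n ↦ |W x| * (M + M) ^ 2) :=
    ((hW.abs.mul_const _).continuousOn.integrableOn_compact
      (isCompact_closedBall 0 _)).integrable_indicator measurableSet_closedBall
  have hε : ∀ᶠ ε : ℝ in 𝓝[>] 0, ε ∈ Set.Ioo (0 : ℝ) 1 := Ioo_mem_nhdsGT one_pos
  simpa [energy] using tendsto_integral_filter_of_dominated_convergence _
    (hε.mono fun ε hε ↦ (hW.mul ((hg.sub (continuous_convolution
      (contDiff_mollifier hε.1).continuous (hasCompactSupport_mollifier hε.1) hg)).pow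
        2)).aestronglyMeasurable)
    (hε.mono fun ε hε ↦ .of_forall (hbound ε hε)) hint (.of_forall hlim)

end Approximation

section Potential

open scoped Convolution

variable {n : ℕ} {k W W' : 𝓔 n → ℝ} {F K : Fin n → 𝓔 n → ℝ} {c M R T ε : ℝ}

lemma energy_sum_convolution_le (hK : ∀ j, Continuous (K j)) (hKc : ∀ j, HasCompactSupport (K j))
    (hM : ∀ j, ∫ x, |K j x| ≤ M) (hF : ∀ j, Continuous (F j)) (hFc : ∀ j, HasCompactSupport (F j))
    (hW : Continuous W) (hW₀ : ∀ x, 0 ≤ W x) (hW' : Continuous W') (hW'₀ : ∀ x, 0 ≤ W' x)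
    (hc : 0 ≤ c) (hle : ∀ j x t, K j t ≠ 0 → F j (x - t) ≠ 0 → W x ≤ c * W' (x - t)) :
    energy W (fun x ↦ ∑ j, (K j ⋆ F j) x) ≤ n * c * M ^ 2 * ∑ j, energy W' (F j) := by
  calc energy W (fun x ↦ ∑ j, (K j ⋆ F j) x)
      ≤ n * ∑ j, energy W (K j ⋆ F j) := by
        simpa using energy_sum_le hW hW₀ (fun j ↦ continuous_convolution (hK j) (hKc j) (hF j))
          fun j ↦ (hKc j).convolution _ (hFc j)
    _ ≤ n * ∑ j, c * M ^ 2 * energy W' (F j) := by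
        gcongr with j
        refine (energy_convolution_le (hK j) (hKc j) (hF j) (hFc j) hW₀ hW' (hle j)).trans
          (mul_le_mul_of_nonneg_right (mul_le_mul_of_nonneg_left ?_ hc) (energy_nonneg hW'₀ _))
        exact pow_le_pow_left₀ (integral_nonneg fun x ↦ abs_nonneg _) (hM j) 2
    _ = n * c * M ^ 2 * ∑ j, energy W' (F j) := by rw [← Finset.mul_sum]; ring

lemma convolution_divergence (hk : ContDiff ℝ 1 k) (hkc : HasCompactSupport k)
    (hF : ∀ j, ContDiff ℝ 1 (F j)) (hFc : ∀ j, HasCompactSupport (F j)) (x : 𝓔 n) :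
    (k ⋆ divergence F) x = ∑ j, (pderiv' j k ⋆ F j) x := by
  rw [Finset.sum_congr rfl fun j _ ↦
    congrFun (pderiv'_convolution_eq_convolution_pderiv' j hk hkc (hF j) (hFc j)) x]
  simp only [convolution_lsmul, divergence, smul_eq_mul, Finset.mul_sum]
  exact integral_finsetSum _ fun j _ ↦
    integrable_mul_comp_sub hk.continuous hkc (continuous_pderiv' j (hF j)) x

/-- An approximate solution `v` of `Δ v = divergence F`, supported within `T` of the support of
`F` and exact up to the mollifications of `divergence F` at the scales `ε` and `T`. -/
noncomputable def potential (ε T : ℝ) (F : Fin n → 𝓔 n → ℝ) (x : 𝓔 n) : ℝ :=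
  ∑ j, (parametrix ε T j ⋆ F j) x

lemma contDiff_potential (hε : 0 < ε) (hεT : ε ≤ T) (hF : ∀ j, Continuous (F j)) :
    ContDiff ℝ 2 (potential ε T F) :=
  ContDiff.sum fun j _ ↦ contDiff_convolution (m := 2)
    (contDiff_infty.1 (contDiff_parametrix hε (hε.trans_le hεT) j) 2)
    (hasCompactSupport_parametrix hε hεT j) (hF j)

lemma potential_eq_zero (hε : 0 < ε) (hεT : ε ≤ T) (hF : ∀ j x, R < ‖x‖ → F j x = 0) {x : 𝓔 n}
    (hx : T + R < ‖x‖) : potential ε T F x = 0 :=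
  Finset.sum_eq_zero fun j _ ↦
    convolution_eq_zero (fun _ ht ↦ parametrix_eq_zero hε hεT j ht.le) (hF j) hx

lemma lap_potential (hε : 0 < ε) (hεT : ε ≤ T) (hF : ∀ j, ContDiff ℝ 1 (F j))
    (hFc : ∀ j, HasCompactSupport (F j)) (x : 𝓔 n) :
    lap (potential ε T F) x = (mollifier ε ⋆ divergence F) x - (mollifier T ⋆ divergence F) x := by
  have hT : 0 < T := hε.trans_le hεT
  have hpar (j : Fin n) : ContDiff ℝ 2 (parametrix ε T j) :=
    contDiff_infty.1 (contDiff_parametrix hε hT j) 2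
  have hmoll {l : ℝ} (hl : 0 < l) : ContDiff ℝ 1 (mollifier l : 𝓔 n → ℝ) :=
    contDiff_infty.1 (contDiff_mollifier hl) 1
  have hint {l : ℝ} (hl : 0 < l) (j : Fin n) :
      Integrable fun t ↦ pderiv' j (mollifier l) t * F j (x - t) :=
    integrable_mul_comp_sub (continuous_pderiv' j (hmoll hl))
      (hasCompactSupport_pderiv' j (hasCompactSupport_mollifier hl)) (hF j).continuous x
  rw [convolution_divergence (hmoll hε) (hasCompactSupport_mollifier hε) hF hFc,
    convolution_divergence (hmoll hT) (hasCompactSupport_mollifier hT) hF hFc,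
    ← Finset.sum_sub_distrib]
  refine (lap_sum (fun j ↦ contDiff_convolution (m := 2) (hpar j)
    (hasCompactSupport_parametrix hε hεT j) (hF j).continuous) x).trans
    (Finset.sum_congr rfl fun j _ ↦ ?_)
  rw [lap_convolution (hpar j) (hasCompactSupport_parametrix hε hεT j) (hF j).continuous,
    funext (lap_parametrix hε hT j)]
  simp only [convolution_lsmul, smul_eq_mul, sub_mul]
  exact integral_sub (hint hε j) (hint hT j)

end Potential

section Estimate

open scoped Convolution

variable {n : ℕ} {a f g h q u : 𝓔 n → ℝ} {F K : Fin n → 𝓔 n → ℝ} {k l m p M T ε κ τ : ℝ}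

lemma norm_add_rpow_le (hp : 0 ≤ p) {y : 𝓔 n} (hy : 1 ≤ ‖y‖) (t : 𝓔 n) :
    ‖y + t‖ ^ p ≤ exp (p * ‖t‖) * ‖y‖ ^ p := by
  have hbase : ‖y + t‖ ≤ exp ‖t‖ * ‖y‖ := by
    calc ‖y + t‖ ≤ ‖y‖ + ‖t‖ := norm_add_le y t
      _ ≤ (‖t‖ + 1) * ‖y‖ := by nlinarith [norm_nonneg t]
      _ ≤ exp ‖t‖ * ‖y‖ := by gcongr; exact add_one_le_exp _
  calc ‖y + t‖ ^ p ≤ (exp ‖t‖ * ‖y‖) ^ p := rpow_le_rpow (norm_nonneg _) hbase hp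
    _ = exp (p * ‖t‖) * ‖y‖ ^ p := by
      rw [mul_rpow (exp_pos _).le (norm_nonneg y), ← exp_mul, mul_comm p]

lemma norm_rpow_le_of_norm_sub_mem_Icc (hτ : 2 ≤ τ) (hp : p ∈ Set.Icc (2 * τ + 2) (2 * τ + 4))
    {x t : 𝓔 n} (ht : τ * ‖t‖ ≤ 1) (hx : ‖x - t‖ ∈ Set.Icc 1 2) :
    ‖x‖ ^ p ≤ 4 * exp 4 * ‖x - t‖ ^ (2 * τ + 2) := by
  have hpt : p * ‖t‖ ≤ 4 := by nlinarith [hp.2, norm_nonneg t]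
  have hpow : ‖x - t‖ ^ p ≤ ‖x - t‖ ^ (2 * τ + 2) * 4 := by
    calc ‖x - t‖ ^ p ≤ ‖x - t‖ ^ (2 * τ + 2 + 2) :=
          rpow_le_rpow_of_exponent_le hx.1 (by linarith [hp.2])
      _ = ‖x - t‖ ^ (2 * τ + 2) * ‖x - t‖ ^ 2 := norm_rpow_add_two _ (by linarith)
      _ ≤ ‖x - t‖ ^ (2 * τ + 2) * 4 := by gcongr; nlinarith [hx.1, hx.2]
  calc ‖x‖ ^ p ≤ exp (p * ‖t‖) * ‖x - t‖ ^ p := by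
        simpa using norm_add_rpow_le (by linarith [hp.1]) hx.1 t
    _ ≤ exp 4 * (‖x - t‖ ^ (2 * τ + 2) * 4) := by gcongr
    _ = 4 * exp 4 * ‖x - t‖ ^ (2 * τ + 2) := by ring

lemma energy_sum_convolution_le_of_norm_mem_Icc (hτ : 2 ≤ τ)
    (hp : p ∈ Set.Icc (2 * τ + 2) (2 * τ + 4)) (hT : τ * T ≤ 1) (hK : ∀ j, Continuous (K j))
    (hKT : ∀ j x, T < ‖x‖ → K j x = 0) (hM : ∀ j, ∫ x, |K j x| ≤ M)
    (hF : ∀ j, Continuous (F j)) (hFc : ∀ j, HasCompactSupport (F j))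
    (hFs : ∀ j x, F j x ≠ 0 → ‖x‖ ∈ Set.Icc 1 2) :
    energy (fun x ↦ ‖x‖ ^ p) (fun x ↦ ∑ j, (K j ⋆ F j) x)
      ≤ n * (4 * exp 4) * M ^ 2 * ∑ j, energy (fun x ↦ ‖x‖ ^ (2 * τ + 2)) (F j) := by
  refine energy_sum_convolution_le hK (fun j ↦ hasCompactSupport_of_norm_le (hKT j)) hM hF hFc
    (continuous_norm_rpow (by linarith [hp.1])) (fun x ↦ by positivity)
    (continuous_norm_rpow (by linarith)) (fun x ↦ by positivity) (by positivity)
    fun j x t ht hx ↦ norm_rpow_le_of_norm_sub_mem_Icc hτ hp ?_ (hFs j _ hx)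
  have htT : ‖t‖ ≤ T := not_lt.1 fun h ↦ ht (hKT j t h)
  exact (mul_le_mul_of_nonneg_left htT (by linarith)).trans hT

/-- The sum of the `L¹` norms of the partial derivatives of the mollifier at scale one, which
bounds the kernels `∂ⱼ (mollifier l)` after rescaling by `l`. -/
noncomputable def mollifierVariation (n : ℕ) : ℝ :=
  ∑ j, ∫ x, |pderiv' j (mollifier 1 : 𝓔 n → ℝ) x|

lemma mollifierVariation_nonneg : 0 ≤ mollifierVariation n :=
  Finset.sum_nonneg fun _ _ ↦ integral_nonneg fun _ ↦ abs_nonneg _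

lemma integral_abs_pderiv'_mollifier_le (j : Fin n) (hl : 0 < l) :
    ∫ x, |pderiv' j (mollifier l : 𝓔 n → ℝ) x| ≤ l⁻¹ * mollifierVariation n := by
  rw [integral_abs_pderiv'_mollifier j hl]
  gcongr
  exact Finset.single_le_sum (f := fun i ↦ ∫ x, |pderiv' i (mollifier 1 : 𝓔 n → ℝ) x|)
    (fun _ _ ↦ integral_nonneg fun _ ↦ abs_nonneg _) (Finset.mem_univ j)

/-- The constant in the weighted bounds for `potential` and for mollified divergences, valid at
all scales `T` with `τ T ≤ 1`. -/
noncomputable def potentialConst (n : ℕ) : ℝ :=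
  n * (4 * exp 4) * (1 + mollifierVariation n) ^ 2

lemma potentialConst_nonneg : 0 ≤ potentialConst n := by
  unfold potentialConst
  positivity

lemma energy_potential_le (hn : n ≠ 0) (hτ : 2 ≤ τ) (hp : p ∈ Set.Icc (2 * τ + 2) (2 * τ + 4))
    (hε : 0 < ε) (hεT : ε ≤ T) (hT : τ * T ≤ 1) (hF : ∀ j, Continuous (F j))
    (hFc : ∀ j, HasCompactSupport (F j)) (hFs : ∀ j x, F j x ≠ 0 → ‖x‖ ∈ Set.Icc 1 2) :
    energy (fun x ↦ ‖x‖ ^ p) (potential ε T F)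
      ≤ potentialConst n * T ^ 2 * ∑ j, energy (fun x ↦ ‖x‖ ^ (2 * τ + 2)) (F j) := by
  have hT₀ : 0 < T := hε.trans_le hεT
  have hM (j : Fin n) : ∫ x, |parametrix ε T j x| ≤ (1 + mollifierVariation n) * T :=
    (integral_abs_parametrix_le hn hε hεT j).trans
      (le_mul_of_one_le_left hT₀.le (by linarith [mollifierVariation_nonneg (n := n)]))
  refine (energy_sum_convolution_le_of_norm_mem_Icc hτ hp hT
    (fun j ↦ (contDiff_parametrix hε hT₀ j).continuous)
    (fun j x hx ↦ parametrix_eq_zero hε hεT j hx.le) hM hF hFc hFs).trans_eq ?_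
  rw [potentialConst, mul_pow, ← mul_assoc]

lemma energy_mollifier_convolution_divergence_le (hτ : 2 ≤ τ)
    (hp : p ∈ Set.Icc (2 * τ + 2) (2 * τ + 4)) (hT₀ : 0 < T) (hT : τ * T ≤ 1)
    (hF : ∀ j, ContDiff ℝ 1 (F j)) (hFc : ∀ j, HasCompactSupport (F j))
    (hFs : ∀ j x, F j x ≠ 0 → ‖x‖ ∈ Set.Icc 1 2) :
    energy (fun x ↦ ‖x‖ ^ p) (mollifier T ⋆ divergence F)
      ≤ potentialConst n * T⁻¹ ^ 2 * ∑ j, energy (fun x ↦ ‖x‖ ^ (2 * τ + 2)) (F j) := by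
  have hmoll : ContDiff ℝ 1 (mollifier T : 𝓔 n → ℝ) := contDiff_infty.1 (contDiff_mollifier hT₀) 1
  have hzero (j : Fin n) (x : 𝓔 n) (hx : T < ‖x‖) : pderiv' j (mollifier T) x = 0 := by
    refine image_eq_zero_of_notMem_tsupport fun h ↦ hx.not_ge ?_
    exact mem_closedBall_zero_iff.1 (closure_minimal (support_mollifier_subset hT₀)
      Metric.isClosed_closedBall (tsupport_pderiv'_subset j _ h))
  have hM (j : Fin n) :
      ∫ x, |pderiv' j (mollifier T : 𝓔 n → ℝ) x| ≤ (1 + mollifierVariation n) * T⁻¹ := by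
    refine (integral_abs_pderiv'_mollifier_le j hT₀).trans ?_
    rw [mul_comm]
    gcongr
    linarith
  rw [funext (convolution_divergence hmoll (hasCompactSupport_mollifier hT₀) hF hFc)]
  refine (energy_sum_convolution_le_of_norm_mem_Icc hτ hp hT
    (fun j ↦ continuous_pderiv' j hmoll) hzero hM (fun j ↦ (hF j).continuous) hFc hFs).trans_eq ?_
  rw [potentialConst, mul_pow, ← mul_assoc]

lemma hasCompactSupport_potential (hε : 0 < ε) (hεT : ε ≤ T)
    (hFc : ∀ j, HasCompactSupport (F j)) : HasCompactSupport (potential ε T F) :=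
  hasCompactSupport_sum fun j ↦ (hasCompactSupport_parametrix hε hεT j).convolution _ (hFc j)

lemma lap_sub_potential (hε : 0 < ε) (hεT : ε ≤ T) (hu : ContDiff ℝ 2 u)
    (hF : ∀ j, ContDiff ℝ 1 (F j)) (hFc : ∀ j, HasCompactSupport (F j))
    (heq : ∀ x, lap u x + k ^ 2 * q x * u x = f x + divergence F x) (x : 𝓔 n) :
    lap (fun y ↦ u y - potential ε T F y) x + k ^ 2 * q x * (u x - potential ε T F x)
      = (f x + (divergence F x - (mollifier ε ⋆ divergence F) x))
        + ((mollifier T ⋆ divergence F) x + -(k ^ 2 * q x) * potential ε T F x) := by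
  rw [lap_sub hu (contDiff_potential hε hεT fun j ↦ (hF j).continuous),
    lap_potential hε hεT hF hFc]
  linear_combination heq x

lemma continuous_mollifier_convolution_divergence (hl : 0 < l) (hF : ∀ j, ContDiff ℝ 1 (F j)) :
    Continuous (mollifier l ⋆ divergence F) :=
  continuous_convolution (contDiff_mollifier hl).continuous (hasCompactSupport_mollifier hl)
    (continuous_divergence hF)

lemma hasCompactSupport_mollifier_convolution_divergence (hl : 0 < l)
    (hFc : ∀ j, HasCompactSupport (F j)) : HasCompactSupport (mollifier l ⋆ divergence F) :=
  (hasCompactSupport_mollifier hl).convolution _ (hasCompactSupport_divergence hFc)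

lemma energy_mollifier_convolution_add_mul_potential_le (hn : n ≠ 0) (hτ : 2 ≤ τ) (hτm : τ ≤ m)
    (hp : p ∈ Set.Icc (2 * τ + 2) (2 * τ + 4)) (hε : 0 < ε) (hεm : ε ≤ m⁻¹) (ha : Continuous a)
    (haκ : ∀ x, |a x| ≤ m ^ 2 * κ) (hF : ∀ j, ContDiff ℝ 1 (F j))
    (hFc : ∀ j, HasCompactSupport (F j)) (hFs : ∀ j x, F j x ≠ 0 → ‖x‖ ∈ Set.Icc 1 2) :
    energy (fun x ↦ ‖x‖ ^ p)
        (fun x ↦ (mollifier m⁻¹ ⋆ divergence F) x + a x * potential ε m⁻¹ F x)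
      ≤ 2 * (1 + κ ^ 2) * (potentialConst n * m ^ 2
        * ∑ j, energy (fun x ↦ ‖x‖ ^ (2 * τ + 2)) (F j)) := by
  have hm : 0 < m := by linarith
  have hT : τ * m⁻¹ ≤ 1 := by rw [← div_eq_mul_inv]; exact div_le_one_of_le₀ hτm hm.le
  have hW : Continuous fun x : 𝓔 n ↦ ‖x‖ ^ p := continuous_norm_rpow (by linarith [hp.1])
  have hW₀ (x : 𝓔 n) : 0 ≤ ‖x‖ ^ p := by positivity
  have hv := (contDiff_potential hε hεm fun j ↦ (hF j).continuous).continuous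
  have hvc := hasCompactSupport_potential hε hεm hFc
  have hmoll := energy_mollifier_convolution_divergence_le hτ hp (inv_pos.2 hm) hT hF hFc hFs
  have hpot := (energy_mul_le hW hW₀ hv hvc haκ).trans (mul_le_mul_of_nonneg_left
    (energy_potential_le hn hτ hp hε hεm hT (fun j ↦ (hF j).continuous) hFc hFs) (sq_nonneg _))
  have hsum := energy_add_le hW hW₀
    (continuous_mollifier_convolution_divergence (inv_pos.2 hm) hF)
    (hasCompactSupport_mollifier_convolution_divergence (inv_pos.2 hm) hFc)
    (ha.mul hv) hvc.mul_left
  have hscale : (m ^ 2 * κ) ^ 2 * m⁻¹ ^ 2 = κ ^ 2 * m ^ 2 := by field_simp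
  rw [inv_inv] at hmoll
  linear_combination hsum + 2 * hmoll + 2 * hpot + 2 * potentialConst n
    * (∑ j, energy (fun x ↦ ‖x‖ ^ (2 * τ + 2)) (F j)) * hscale

lemma energy_helmholtz_sub_potential_le (hn : n ≠ 0) (hτ : 2 ≤ τ) (hτm : τ ≤ m) (hk : 0 ≤ k)
    (hkm : k ≤ m) (hε : 0 < ε) (hεm : ε ≤ m⁻¹) (hu : ContDiff ℝ 2 u) (hq : Continuous q)
    (hqκ : ∀ x, |q x| ≤ κ) (hf : Continuous f) (hfc : HasCompactSupport f)
    (hF : ∀ j, ContDiff ℝ 1 (F j)) (hFc : ∀ j, HasCompactSupport (F j))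
    (hFs : ∀ j x, F j x ≠ 0 → ‖x‖ ∈ Set.Icc 1 2)
    (heq : ∀ x, lap u x + k ^ 2 * q x * u x = f x + divergence F x) :
    energy (fun x ↦ ‖x‖ ^ (2 * τ + 4)) (fun x ↦
        lap (fun y ↦ u y - potential ε m⁻¹ F y) x + k ^ 2 * q x * (u x - potential ε m⁻¹ F x))
      ≤ 4 * (energy (fun x ↦ ‖x‖ ^ (2 * τ + 4)) f
        + energy (fun x ↦ ‖x‖ ^ (2 * τ + 4))
          (fun x ↦ divergence F x - (mollifier ε ⋆ divergence F) x)
        + (1 + κ ^ 2) * (potentialConst n * m ^ 2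
          * ∑ j, energy (fun x ↦ ‖x‖ ^ (2 * τ + 2)) (F j))) := by
  have hm : 0 < m⁻¹ := inv_pos.2 (by linarith)
  have hkq : Continuous fun x ↦ -(k ^ 2 * q x) := (hq.const_mul _).neg
  have hkqm (x : 𝓔 n) : |-(k ^ 2 * q x)| ≤ m ^ 2 * κ := by
    rw [abs_neg, abs_mul, abs_of_nonneg (sq_nonneg k)]
    gcongr
    exact hqκ x
  have hcorr := energy_mollifier_convolution_add_mul_potential_le hn hτ hτm
    (p := 2 * τ + 4) ⟨by linarith, le_rfl⟩ hε hεm hkq hkqm hF hFc hFs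
  rw [funext (lap_sub_potential hε hεm hu hF hFc heq)]
  have herr : Continuous fun x ↦ divergence F x - (mollifier ε ⋆ divergence F) x :=
    (continuous_divergence hF).sub (continuous_mollifier_convolution_divergence hε hF)
  have herrc : HasCompactSupport fun x ↦ divergence F x - (mollifier ε ⋆ divergence F) x :=
    (hasCompactSupport_divergence hFc).sub
      (hasCompactSupport_mollifier_convolution_divergence hε hFc)
  have hcor : Continuous fun x ↦
      (mollifier m⁻¹ ⋆ divergence F) x + -(k ^ 2 * q x) * potential ε m⁻¹ F x :=
    (continuous_mollifier_convolution_divergence hm hF).add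
      (hkq.mul (contDiff_potential hε hεm fun j ↦ (hF j).continuous).continuous)
  have hcorc : HasCompactSupport fun x ↦
      (mollifier m⁻¹ ⋆ divergence F) x + -(k ^ 2 * q x) * potential ε m⁻¹ F x :=
    (hasCompactSupport_mollifier_convolution_divergence hm hFc).add
      (hasCompactSupport_potential hε hεm hFc).mul_left
  have hsum := energy_add_add_le (W := fun x ↦ ‖x‖ ^ (2 * τ + 4))
    (continuous_norm_rpow (by linarith)) (fun x ↦ by positivity) hf hfc herr herrc hcor hcorc
  linarith

/-- The quadratic form in `u` that the radial multiplier controls. -/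
noncomputable def carlemanEnergy (τ k : ℝ) (q u : 𝓔 n → ℝ) : ℝ :=
  τ ^ 2 * energy (fun x ↦ ‖x‖ ^ (2 * τ + 2)) u
    + τ * k ^ 2 * energy (fun x ↦ q x * ‖x‖ ^ (2 * τ + 2)) u

lemma carlemanEnergy_add_le (hτ : 0 ≤ τ) (hq : Continuous q) (hq₀ : ∀ x, 0 ≤ q x)
    (hg : Continuous g) (hgc : HasCompactSupport g) (hh : Continuous h)
    (hhc : HasCompactSupport h) :
    carlemanEnergy τ k q (fun x ↦ g x + h x)
      ≤ 2 * (carlemanEnergy τ k q g + carlemanEnergy τ k q h) := by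
  have hW : Continuous fun x : 𝓔 n ↦ ‖x‖ ^ (2 * τ + 2) := continuous_norm_rpow (by linarith)
  have hplain := energy_add_le hW (fun x ↦ by positivity) hg hgc hh hhc
  have hweighted := energy_add_le (hq.mul hW) (fun x ↦ mul_nonneg (hq₀ x) (by positivity))
    hg hgc hh hhc
  simp only [carlemanEnergy]
  linear_combination τ ^ 2 * hplain + τ * k ^ 2 * hweighted

lemma carlemanEnergy_le (hτ : 2 ≤ τ) (hu : ContDiff ℝ 2 u) (hc : HasCompactSupport u)
    (hsupp : ∀ x, u x ≠ 0 → ‖x‖ ≤ 3) (hq : ContDiff ℝ 1 q) (hq₀ : ∀ x, 0 ≤ q x)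
    (hqe : ∀ x, 0 ≤ euler q x) :
    carlemanEnergy τ k q u
      ≤ 9 / 4 * energy (fun x ↦ ‖x‖ ^ (2 * τ + 4)) fun x ↦ lap u x + k ^ 2 * q x * u x := by
  have hmult := sq_mul_energy_add_le (by linarith) k three_pos hu hc hsupp hq hqe
  have hQ := energy_nonneg (W := fun x ↦ q x * ‖x‖ ^ (2 * τ + 2))
    (fun x ↦ mul_nonneg (hq₀ x) (by positivity)) u
  have hrest : 0 ≤ (8 * τ + 9) * k ^ 2 * energy (fun x ↦ q x * ‖x‖ ^ (2 * τ + 2)) u := by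
    positivity
  simp only [carlemanEnergy]
  linear_combination 9 / 4 * hmult + hrest

lemma carlemanEnergy_potential_le (hn : n ≠ 0) (hτ : 2 ≤ τ) (hτm : τ ≤ m) (hk : 0 ≤ k)
    (hkm : k ≤ m) (hε : 0 < ε) (hεm : ε ≤ m⁻¹) (hq : Continuous q)
    (hqκ : ∀ x, q x ≤ κ) (hF : ∀ j, Continuous (F j)) (hFc : ∀ j, HasCompactSupport (F j))
    (hFs : ∀ j x, F j x ≠ 0 → ‖x‖ ∈ Set.Icc 1 2) :
    carlemanEnergy τ k q (potential ε m⁻¹ F)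
      ≤ 2 * (1 + κ ^ 2) * (potentialConst n * m ^ 2
        * ∑ j, energy (fun x ↦ ‖x‖ ^ (2 * τ + 2)) (F j)) := by
  have hm : 0 < m := by linarith
  have hT : τ * m⁻¹ ≤ 1 := by rw [← div_eq_mul_inv]; exact div_le_one_of_le₀ hτm hm.le
  have hW : Continuous fun x : 𝓔 n ↦ ‖x‖ ^ (2 * τ + 2) := continuous_norm_rpow (by linarith)
  set v := potential ε m⁻¹ F
  have hpot : energy (fun x ↦ ‖x‖ ^ (2 * τ + 2)) v ≤ _ :=
    energy_potential_le hn hτ ⟨le_rfl, by linarith⟩ hε hεm hT hF hFc hFs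
  have hqv : energy (fun x ↦ q x * ‖x‖ ^ (2 * τ + 2)) v
      ≤ κ * energy (fun x ↦ ‖x‖ ^ (2 * τ + 2)) v :=
    energy_le_const_mul_energy (hq.mul hW) hW (contDiff_potential hε hεm hF).continuous
      (hasCompactSupport_potential hε hεm hFc)
      fun x _ ↦ mul_le_mul_of_nonneg_right (hqκ x) (by positivity)
  have hm₁ : 1 ≤ m := by linarith
  have hτ₄ : τ ^ 2 ≤ m ^ 4 :=
    (pow_le_pow_left₀ (by linarith) hτm 2).trans (pow_le_pow_right₀ hm₁ (by norm_num))
  have hτk₄ : τ * k ^ 2 ≤ m ^ 4 := by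
    calc τ * k ^ 2 ≤ m * m ^ 2 := by gcongr
      _ = m ^ 3 := by ring
      _ ≤ m ^ 4 := pow_le_pow_right₀ hm₁ (by norm_num)
  have hcoef : τ ^ 2 + τ * k ^ 2 * κ ≤ 2 * (1 + κ ^ 2) * m ^ 4 := by
    have hκ : κ ≤ 1 + κ ^ 2 := by nlinarith [sq_nonneg (κ - 1)]
    have hκm : 0 ≤ κ ^ 2 * m ^ 4 := by positivity
    linear_combination hτ₄ + τ * k ^ 2 * hκ + (1 + κ ^ 2) * hτk₄ + hκm
  calc carlemanEnergy τ k q v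
      ≤ (τ ^ 2 + τ * k ^ 2 * κ) * energy (fun x ↦ ‖x‖ ^ (2 * τ + 2)) v := by
        rw [carlemanEnergy]
        linear_combination τ * k ^ 2 * hqv
    _ ≤ 2 * (1 + κ ^ 2) * m ^ 4 * _ :=
        mul_le_mul hcoef hpot (energy_nonneg (fun x ↦ by positivity) v) (by positivity)
    _ = _ := by field_simp

lemma carlemanEnergy_le_add_energy_sub_mollifier_convolution (hn : n ≠ 0) (hτ : 2 ≤ τ)
    (hτm : τ ≤ m) (hk : 0 ≤ k) (hkm : k ≤ m) (hε : 0 < ε) (hεm : ε ≤ m⁻¹) (hu : ContDiff ℝ 2 u)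
    (hc : HasCompactSupport u) (hsupp : ∀ x, u x ≠ 0 → ‖x‖ ≤ 3) (hq : ContDiff ℝ 1 q)
    (hqκ : ∀ x, q x ∈ Set.Icc 0 κ) (hqe : ∀ x, 0 ≤ euler q x) (hf : Continuous f)
    (hfc : HasCompactSupport f) (hF : ∀ j, ContDiff ℝ 1 (F j))
    (hFc : ∀ j, HasCompactSupport (F j)) (hFs : ∀ j x, F j x ≠ 0 → ‖x‖ ∈ Set.Icc 1 2)
    (heq : ∀ x, lap u x + k ^ 2 * q x * u x = f x + divergence F x) :
    carlemanEnergy τ k q u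
      ≤ 22 * (energy (fun x ↦ ‖x‖ ^ (2 * τ + 4)) f
        + energy (fun x ↦ ‖x‖ ^ (2 * τ + 4))
          (fun x ↦ divergence F x - (mollifier ε ⋆ divergence F) x)
        + (1 + κ ^ 2) * (potentialConst n * m ^ 2
          * ∑ j, energy (fun x ↦ ‖x‖ ^ (2 * τ + 2)) (F j))) := by
  have hq₀ (x : 𝓔 n) : 0 ≤ q x := (hqκ x).1
  have hF₀ (j : Fin n) : Continuous (F j) := (hF j).continuous
  set v := potential ε m⁻¹ F
  have hv : ContDiff ℝ 2 v := contDiff_potential hε hεm hF₀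
  have hvc : HasCompactSupport v := hasCompactSupport_potential hε hεm hFc
  have hm : m⁻¹ ≤ 1 := inv_le_one_of_one_le₀ (by linarith)
  have hwsupp (x : 𝓔 n) (hx : u x - v x ≠ 0) : ‖x‖ ≤ 3 := by
    by_contra! hlt
    have hux : u x = 0 := not_not.1 fun h ↦ (hsupp x h).not_gt hlt
    have hvx : v x = 0 := potential_eq_zero (R := 2) hε hεm
      (fun j y hy ↦ not_not.1 fun h ↦ (hFs j y h).2.not_gt hy) (by linarith)
    exact hx (by rw [hux, hvx, sub_zero])
  have hw := carlemanEnergy_le (k := k) hτ (hu.sub hv) (hc.sub hvc) hwsupp hq hq₀ hqe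
  have hsource := energy_helmholtz_sub_potential_le hn hτ hτm hk hkm hε hεm hu hq.continuous
    (fun x ↦ (abs_of_nonneg (hq₀ x)).trans_le (hqκ x).2) hf hfc hF hFc hFs heq
  have hpot := carlemanEnergy_potential_le hn hτ hτm hk hkm hε hεm hq.continuous
    (fun x ↦ (hqκ x).2) hF₀ hFc hFs
  have hadd := carlemanEnergy_add_le (k := k) (τ := τ) (by linarith) hq.continuous hq₀
    (hu.sub hv).continuous (hc.sub hvc) hv.continuous hvc
  simp only [sub_add_cancel] at hadd
  have hN := energy_nonneg (W := fun x : 𝓔 n ↦ ‖x‖ ^ (2 * τ + 4)) (fun x ↦ by positivity) f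
  have hE := energy_nonneg (W := fun x : 𝓔 n ↦ ‖x‖ ^ (2 * τ + 4)) (fun x ↦ by positivity)
    fun x ↦ divergence F x - (mollifier ε ⋆ divergence F) x
  linarith

lemma carlemanEnergy_le_energy_add_sum_energy (hn : n ≠ 0) (hτ : 2 ≤ τ) (hk : 0 ≤ k)
    (hu : ContDiff ℝ 2 u) (hc : HasCompactSupport u) (hsupp : ∀ x, u x ≠ 0 → ‖x‖ ≤ 3)
    (hq : ContDiff ℝ 1 q) (hqκ : ∀ x, q x ∈ Set.Icc 0 κ) (hqe : ∀ x, 0 ≤ euler q x)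
    (hf : Continuous f) (hfc : HasCompactSupport f) (hF : ∀ j, ContDiff ℝ 1 (F j))
    (hFc : ∀ j, HasCompactSupport (F j)) (hFs : ∀ j x, F j x ≠ 0 → ‖x‖ ∈ Set.Icc 1 2)
    (heq : ∀ x, lap u x + k ^ 2 * q x * u x = f x + divergence F x) :
    carlemanEnergy τ k q u
      ≤ 22 * (energy (fun x ↦ ‖x‖ ^ (2 * τ + 4)) f
        + (1 + κ ^ 2) * (potentialConst n * max τ k ^ 2
          * ∑ j, energy (fun x ↦ ‖x‖ ^ (2 * τ + 2)) (F j))) := by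
  have herr := tendsto_energy_sub_mollifier_convolution hn
    (continuous_norm_rpow (p := 2 * τ + 4) (by linarith)) (continuous_divergence hF)
    (hasCompactSupport_divergence hFc)
  have hlim := ((herr.const_add (energy (fun x ↦ ‖x‖ ^ (2 * τ + 4)) f)).add_const
    ((1 + κ ^ 2) * (potentialConst n * max τ k ^ 2
      * ∑ j, energy (fun x ↦ ‖x‖ ^ (2 * τ + 2)) (F j)))).const_mul 22
  rw [add_zero] at hlim
  refine ge_of_tendsto hlim ?_
  filter_upwards [Ioo_mem_nhdsGT (inv_pos.2 (lt_max_of_lt_left (by linarith : 0 < τ)))] with ε hε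
  exact carlemanEnergy_le_add_energy_sub_mollifier_convolution hn hτ (le_max_left τ k) hk
    (le_max_right τ k) hε.1 hε.2.le hu hc hsupp hq hqκ hqe hf hfc hF hFc hFs heq

lemma energy_norm_gradient_add_sq_mul_energy_le_carlemanEnergy (hτ : 2 ≤ τ) (hu : ContDiff ℝ 2 u)
    (hc : HasCompactSupport u) (hsupp : ∀ x, u x ≠ 0 → 1 ≤ ‖x‖) (hq : Continuous q)
    (hq₀ : ∀ x, 0 ≤ q x) (hf : Continuous f) (hfc : HasCompactSupport f)
    (hF : ∀ j, ContDiff ℝ 1 (F j)) (hFc : ∀ j, HasCompactSupport (F j))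
    (heq : ∀ x, lap u x + k ^ 2 * q x * u x = f x + divergence F x) :
    energy (fun x ↦ ‖x‖ ^ (2 * τ + 2)) (fun x ↦ ‖gradient u x‖)
        + τ ^ 2 * energy (fun x ↦ ‖x‖ ^ (2 * τ)) u
        + τ * k ^ 2 * energy (fun x ↦ q x * ‖x‖ ^ (2 * τ + 2)) u
      ≤ 11 * carlemanEnergy τ k q u + energy (fun x ↦ ‖x‖ ^ (2 * τ + 4)) f
        + ∑ j, energy (fun x ↦ ‖x‖ ^ (2 * τ + 2)) (F j) := by
  have hweight : energy (fun x ↦ ‖x‖ ^ (2 * τ)) u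
      ≤ 1 * energy (fun x ↦ ‖x‖ ^ (2 * τ + 2)) u := by
    refine energy_le_const_mul_energy (continuous_norm_rpow (by linarith))
      (continuous_norm_rpow (by linarith)) hu.continuous hc fun x hx ↦ ?_
    rw [one_mul]
    exact rpow_le_rpow_of_exponent_le (hsupp x hx) (by linarith)
  have hgrad := energy_norm_gradient_le (p := 2 * τ) (by linarith) hu hc hq hF hFc hf hfc heq
  have hQ : 0 ≤ k ^ 2 * energy (fun x ↦ q x * ‖x‖ ^ (2 * τ + 2)) u :=
    mul_nonneg (sq_nonneg k) (energy_nonneg (fun x ↦ mul_nonneg (hq₀ x) (by positivity)) u)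
  have hA := energy_nonneg (W := fun x : 𝓔 n ↦ ‖x‖ ^ (2 * τ)) (fun x ↦ by positivity) u
  have hcoef : (2 * τ + 2) ^ 2 + 1 + τ ^ 2 ≤ 11 * τ ^ 2 := by nlinarith
  have hcoefA := mul_le_mul_of_nonneg_right hcoef hA
  have hτQ := mul_nonneg (by linarith : 0 ≤ 10 * τ - 2) hQ
  simp only [carlemanEnergy]
  linear_combination hgrad + hcoefA + 11 * τ ^ 2 * hweight + hτQ

lemma sqrt_add_sqrt_add_sqrt_le {a b c : ℝ} (ha : 0 ≤ a) (hb : 0 ≤ b) (hc : 0 ≤ c) :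
    √a + √b + √c ≤ √(3 * (a + b + c)) := by
  refine le_sqrt_of_sq_le ?_
  nlinarith [sq_sqrt ha, sq_sqrt hb, sq_sqrt hc, sq_nonneg (√a - √b), sq_nonneg (√b - √c),
    sq_nonneg (√a - √c)]

lemma sqrt_add_sq_mul_sum_le {ι : Type*} (s : Finset ι) {a c : ℝ} {b : ι → ℝ} (ha : 0 ≤ a)
    (hb : ∀ i, 0 ≤ b i) (hc : 0 ≤ c) :
    √(a + c ^ 2 * ∑ i ∈ s, b i) ≤ √a + c * ∑ i ∈ s, √(b i) := by
  have hsum : ∑ i ∈ s, b i ≤ (∑ i ∈ s, √(b i)) ^ 2 := by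
    simpa [sq_sqrt, hb] using
      Finset.sum_sq_le_sq_sum_of_nonneg (s := s) fun i _ ↦ sqrt_nonneg (b i)
  refine sqrt_le_iff.2 ⟨by positivity, ?_⟩
  have hcross : 0 ≤ 2 * √a * (c * ∑ i ∈ s, √(b i)) := by positivity
  linear_combination hcross + c ^ 2 * hsum - sq_sqrt ha

lemma mul_sqrt_add_sqrt_add_mul_sqrt_le {ι : Type*} {s : Finset ι} {A C G N Q : ℝ} {b : ι → ℝ}
    (hτ : 0 ≤ τ) (hk : 0 ≤ k) (hm : 0 ≤ m) (hA : 0 ≤ A) (hG : 0 ≤ G) (hQ : 0 ≤ Q) (hN : 0 ≤ N)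
    (hb : ∀ i, 0 ≤ b i) (hC : 0 ≤ C)
    (h : G + τ ^ 2 * A + τ * k ^ 2 * Q ≤ C * (N + m ^ 2 * ∑ i ∈ s, b i)) :
    τ * √A + √G + √τ * k * √Q ≤ √(3 * C) * (√N + m * ∑ i ∈ s, √(b i)) := by
  calc τ * √A + √G + √τ * k * √Q = √(τ ^ 2 * A) + √G + √(τ * k ^ 2 * Q) := by
        rw [sqrt_mul (sq_nonneg τ), sqrt_sq hτ, sqrt_mul (by positivity), sqrt_mul hτ, sqrt_sq hk]
    _ ≤ √(3 * (τ ^ 2 * A + G + τ * k ^ 2 * Q)) :=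
        sqrt_add_sqrt_add_sqrt_le (by positivity) hG (by positivity)
    _ ≤ √(3 * C * (N + m ^ 2 * ∑ i ∈ s, b i)) := sqrt_le_sqrt (by linarith)
    _ = √(3 * C) * √(N + m ^ 2 * ∑ i ∈ s, b i) := sqrt_mul (by positivity) _
    _ ≤ √(3 * C) * (√N + m * ∑ i ∈ s, √(b i)) := by
        gcongr
        exact sqrt_add_sq_mul_sum_le s hN hb hm

/-- The constant in the Carleman estimate for squared norms. -/
noncomputable def carlemanConst (n : ℕ) (κ : ℝ) : ℝ :=
  242 * (1 + (1 + κ ^ 2) * potentialConst n) + 1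

lemma carlemanConst_pos : 0 < carlemanConst n κ := by
  have := potentialConst_nonneg (n := n)
  unfold carlemanConst
  positivity

lemma energy_norm_gradient_add_sq_mul_energy_le (hn : n ≠ 0) (hτ : 2 ≤ τ) (hk : 0 ≤ k)
    (hu : ContDiff ℝ 2 u) (hc : HasCompactSupport u) (hsupp : ∀ x, u x ≠ 0 → ‖x‖ ∈ Set.Icc 1 2)
    (hq : ContDiff ℝ 1 q) (hqκ : ∀ x, q x ∈ Set.Icc 0 κ) (hqe : ∀ x, 0 ≤ euler q x)
    (hf : Continuous f) (hfc : HasCompactSupport f) (hF : ∀ j, ContDiff ℝ 1 (F j))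
    (hFc : ∀ j, HasCompactSupport (F j)) (hFs : ∀ j x, F j x ≠ 0 → ‖x‖ ∈ Set.Icc 1 2)
    (heq : ∀ x, lap u x + k ^ 2 * q x * u x = f x + divergence F x) :
    energy (fun x ↦ ‖x‖ ^ (2 * τ + 2)) (fun x ↦ ‖gradient u x‖)
        + τ ^ 2 * energy (fun x ↦ ‖x‖ ^ (2 * τ)) u
        + τ * k ^ 2 * energy (fun x ↦ q x * ‖x‖ ^ (2 * τ + 2)) u
      ≤ carlemanConst n κ * (energy (fun x ↦ ‖x‖ ^ (2 * τ + 4)) f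
        + max τ k ^ 2 * ∑ j, energy (fun x ↦ ‖x‖ ^ (2 * τ + 2)) (F j)) := by
  have hcarleman := carlemanEnergy_le_energy_add_sum_energy hn hτ hk hu hc
    (fun x hx ↦ by linarith [(hsupp x hx).2]) hq hqκ hqe hf hfc hF hFc hFs heq
  have hgrad := energy_norm_gradient_add_sq_mul_energy_le_carlemanEnergy hτ hu hc
    (fun x hx ↦ (hsupp x hx).1) hq.continuous (fun x ↦ (hqκ x).1) hf hfc hF hFc heq
  set N := energy (fun x ↦ ‖x‖ ^ (2 * τ + 4)) f
  set S := ∑ j, energy (fun x ↦ ‖x‖ ^ (2 * τ + 2)) (F j)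
  have hN : 0 ≤ N := energy_nonneg (fun x ↦ by positivity) f
  have hS : 0 ≤ S := Finset.sum_nonneg fun j _ ↦ energy_nonneg (fun x ↦ by positivity) _
  have hm : 1 ≤ max τ k ^ 2 := one_le_pow₀ (le_max_of_le_left (by linarith))
  have hSm : S ≤ max τ k ^ 2 * S := le_mul_of_one_le_left hS hm
  have hB := potentialConst_nonneg (n := n)
  have hBN : 0 ≤ (1 + κ ^ 2) * potentialConst n * N := by positivity
  have hmS : 0 ≤ max τ k ^ 2 * S := by positivity
  rw [carlemanConst]
  linear_combination hgrad + 11 * hcarleman + hSm + 242 * hBN + 242 * hmS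

lemma norm_mem_Icc_of_mem_ball_diff_closure_ball {x : 𝓔 n}
    (hx : x ∈ Metric.ball 0 2 \ closure (Metric.ball 0 1)) : ‖x‖ ∈ Set.Icc 1 2 :=
  ⟨not_lt.1 fun h ↦ hx.2 (subset_closure (mem_ball_zero_iff.2 h)), (mem_ball_zero_iff.1 hx.1).le⟩

end Estimate

theorem carleman_estimate_acoustic_general (n : ℕ) (hn : n ≠ 0) (κ : ℝ) :
    ∃ C > (0 : ℝ), ∀ k : ℝ, 0 ≤ k → ∀ q : 𝓔 n → ℝ, ContDiff ℝ 1 q →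
      (∀ x, q x ∈ Set.Icc 0 κ) → (∀ x, 0 ≤ ⟪gradient q x, x⟫_ℝ) →
      ∀ τ : ℝ, 2 ≤ τ → ∀ (u f : 𝓔 n → ℝ) (F : Fin n → 𝓔 n → ℝ),
        ContDiff ℝ 2 u → (∀ x, u x ≠ 0 → ‖x‖ ∈ Set.Icc 1 2) →
        (∀ j, ContDiff ℝ 1 (F j)) → (∀ j x, F j x ≠ 0 → ‖x‖ ∈ Set.Icc 1 2) →
        (∀ x, lap u x + k ^ 2 * q x * u x = f x + ∑ j, pderiv' j (F j) x) →
        τ * (∫ x, ‖x‖ ^ (2 * τ) * (u x) ^ 2) ^ ((1 : ℝ) / 2)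
            + (∫ x, ‖x‖ ^ (2 * τ + 2) * ‖gradient u x‖ ^ 2) ^ ((1 : ℝ) / 2)
            + τ ^ ((1 : ℝ) / 2) * k *
              (∫ x, q x * ‖x‖ ^ (2 * τ + 2) * (u x) ^ 2) ^ ((1 : ℝ) / 2)
          ≤ C * ((∫ x, ‖x‖ ^ (2 * τ + 4) * (f x) ^ 2) ^ ((1 : ℝ) / 2)
              + max τ k *
                ∑ j : Fin n, (∫ x, ‖x‖ ^ (2 * τ + 2) * (F j x) ^ 2) ^ ((1 : ℝ) / 2)) := by
  refine ⟨√(3 * carlemanConst n κ), sqrt_pos.2 (mul_pos three_pos carlemanConst_pos),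
    fun k hk q hq hqκ hqe τ hτ u f F hu hus hF hFs heq ↦ ?_⟩
  have hc {g : 𝓔 n → ℝ} (hg : ∀ x, g x ≠ 0 → ‖x‖ ∈ Set.Icc 1 2) : HasCompactSupport g :=
    hasCompactSupport_of_norm_le fun x hx ↦ not_not.1 fun h ↦ (hg x h).2.not_gt hx
  have hfeq : f = fun x ↦ lap u x + k ^ 2 * q x * u x - divergence F x :=
    funext fun x ↦ eq_sub_of_add_eq (heq x).symm
  have hf : Continuous f := hfeq ▸ ((continuous_lap hu).add
    ((hq.continuous.const_mul _).mul hu.continuous)).sub (continuous_divergence hF)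
  have hfc : HasCompactSupport f := hfeq ▸ ((hasCompactSupport_lap (hc hus)).add
    (hc hus).mul_left).sub (hasCompactSupport_divergence fun j ↦ hc (hFs j))
  have hsq := energy_norm_gradient_add_sq_mul_energy_le hn hτ hk hu (hc hus) hus hq hqκ
    (fun x ↦ (inner_gradient_self q x).symm ▸ hqe x) hf hfc hF (fun j ↦ hc (hFs j)) hFs heq
  simp only [← sqrt_eq_rpow]
  exact mul_sqrt_add_sqrt_add_mul_sqrt_le (by linarith) hk (le_max_of_le_right hk)
    (energy_nonneg (fun x ↦ by positivity) u)
    (energy_nonneg (fun x ↦ by positivity) fun x ↦ ‖gradient u x‖)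
    (energy_nonneg (fun x ↦ mul_nonneg (hqκ x).1 (by positivity)) u)
    (energy_nonneg (fun x ↦ by positivity) f)
    (fun j ↦ energy_nonneg (fun x ↦ by positivity) (F j)) carlemanConst_pos.le hsq

/-- Carleman estimate with weight `φ(x) = τ log |x|` for the acoustic Helmholtz operator
(Proposition 5.1). -/
theorem carleman_estimate_acoustic (n : ℕ) (hn : 2 ≤ n) (κ : ℝ) (hκ : 1 < κ) :
    ∃ τ₀ > (0 : ℝ), ∃ C > (0 : ℝ),
      ∀ k : ℝ, 1 ≤ k →
      ∀ q : EuclideanSpace ℝ (Fin n) → ℝ,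
        ContDiff ℝ 1 q →
        (∀ x, κ⁻¹ ≤ q x ∧ q x ≤ κ) →
        (∀ x, 0 ≤ ⟪gradient q x, x⟫_ℝ) →
      ∀ τ : ℝ, τ₀ ≤ τ →
      ∀ (u f : EuclideanSpace ℝ (Fin n) → ℝ)
        (F : Fin n → EuclideanSpace ℝ (Fin n) → ℝ),
        ContDiff ℝ 2 u → HasCompactSupport u →
        tsupport u ⊆ Metric.ball 0 2 \ closure (Metric.ball 0 1) →
        (∀ j, ContDiff ℝ 1 (F j) ∧ HasCompactSupport (F j) ∧
          tsupport (F j) ⊆ Metric.ball 0 2 \ closure (Metric.ball 0 1)) →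
        Continuous f →
        tsupport f ⊆ Metric.ball 0 2 \ closure (Metric.ball 0 1) →
        (∀ x, lap u x + k ^ 2 * q x * u x = f x + ∑ j : Fin n, pderiv' j (F j) x) →
        τ * (∫ x, ‖x‖ ^ (2 * τ) * (u x) ^ 2) ^ ((1 : ℝ) / 2)
            + (∫ x, ‖x‖ ^ (2 * τ + 2) * ‖gradient u x‖ ^ 2) ^ ((1 : ℝ) / 2)
            + τ ^ ((1 : ℝ) / 2) * k *
              (∫ x, q x * ‖x‖ ^ (2 * τ + 2) * (u x) ^ 2) ^ ((1 : ℝ) / 2)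
          ≤ C * ((∫ x, ‖x‖ ^ (2 * τ + 4) * (f x) ^ 2) ^ ((1 : ℝ) / 2)
              + max τ k *
                ∑ j : Fin n, (∫ x, ‖x‖ ^ (2 * τ + 2) * (F j x) ^ 2) ^ ((1 : ℝ) / 2)) := by
  obtain ⟨C, hC, H⟩ := carleman_estimate_acoustic_general n (by lia) κ
  exact ⟨2, two_pos, C, hC, fun k hk q hq hqκ hqe τ hτ u f F hu _ hus hF _ _ heq ↦
    H k (by linarith) q hq (fun x ↦ ⟨(by positivity : 0 ≤ κ⁻¹).trans (hqκ x).1, (hqκ x).2⟩) hqe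
      τ hτ u f F hu
      (fun x hx ↦ norm_mem_Icc_of_mem_ball_diff_closure_ball (hus (subset_tsupport u hx)))
      (fun j ↦ (hF j).1) (fun j x hx ↦
        norm_mem_Icc_of_mem_ball_diff_closure_ball ((hF j).2.2 (subset_tsupport _ hx))) heq⟩
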